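/- arXiv:math/0604324 — 2 statements merged into one kernel-verified Lean document; each statement's English description precedes it below -/
import Mathlib

section
/- Let m be a natural number, B > 0, and 0 < a < 1, and suppose φ is a continuous map from the closure of Q to the closure of Ω_{B,m} which restricts to a holomorphic bijection from Q onto Ω_{B,m}, satisfies |φ(z)| → ∞ as |z| → ∞ in Q, and satisfies φ(0) = iB, φ(a) = 0, and φ(1) = π(m+1). Then there exists an odd real polynomial P of degree 2m+1 such that P(z) = 1 − (1/cosh B)·cos(φ(z)) for all z ∈ Q and sup_{x ∈ X(a)} |P(x) − sgn(x)| = 1/cosh(B) = L_m(a); i.e., P is the polynomial of degree at most 2m+1 of least uniform deviation from sgn on X(a). -/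
/-!
The square root `qsqrt` maps the closed upper half-plane onto the closed quadrant, so `Φ = φ ∘ qsqrt`
is continuous up to the real line, which it maps to the boundary of `Ω_{B,m}`
(`boundary_notMem_image`). No theory of prime ends is needed to see which boundary arcs correspond:
on each side of `Ω_{B,m}` one of `iΦ`, `Φ`, `i(π(m+1) - Φ)` and, on the curve,
`i(1 - cos Φ / cosh B)` is real and has nonnegative imaginary part nearby, so its real part increases
by the integrated Cauchy–Riemann equations (`re_le_re_of_im_nonneg`). Hence the boundary parameter is
monotone (`monotone_bdParam`), and the values of `φ` at `0`, `a`, `1` locate all the arcs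
(`boundary_correspondence`).

The function `T = 1 - cos φ / cosh B` is therefore imaginary on the positive imaginary axis, because
the curve is `cos (Re ζ) cosh (Im ζ) = cosh B`, and real on the positive real axis. So
`z T(z)`, as a function of `w = z²`, is real on the real line, extends by reflection to an entire
function, and tends to infinity; it is thus a polynomial in `w` vanishing at `0`
(`exists_odd_polynomial`), and `T` is an odd polynomial `P`. Since `P` grows like
`-exp (-iφ) / (2 cosh B)`, its degree can be read off from the change of `Re φ` along a large
quarter circle (`natDegree_eq`).

On `[a,1]` the map `φ` is real and increases from `0` to `π(m+1)`, so that `P - 1 = -cos φ / cosh B`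
alternates at `m + 2` points. For an odd polynomial of degree `2m + 1` this is optimal by Chebyshev's
zero-counting argument (`alternation_lower_bound`).
-/

open Filter Set

/-- The set `X(a) = [-1,-a] ∪ [a,1]`. -/
def X (a : ℝ) : Set ℝ := Icc (-1) (-a) ∪ Icc a 1

/-- The error of best uniform approximation of `sgn` on `X(a)` by real polynomials of
degree at most `2m+1`. -/
noncomputable def Lm (m : ℕ) (a : ℝ) : ℝ :=
  sInf { r | ∃ p : Polynomial ℝ, p.natDegree ≤ 2 * m + 1 ∧
    r = sSup ((fun x => |p.eval x - Real.sign x|) '' X a) }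

/-- The open first quadrant. -/
def Q : Set ℂ := {z | 0 < z.re ∧ 0 < z.im}

/-- The boundary function of the regions `Ω_B` and `Ω_{B,m}`. -/
noncomputable def gB (B y : ℝ) : ℝ :=
  if y ≤ B then 0 else Real.arccos (Real.cosh B / Real.cosh y)

/-- The region `Ω_{B,m}`. -/
noncomputable def ΩBm (B : ℝ) (m : ℕ) : Set ℂ :=
  {z | 0 < z.im ∧ gB B z.im < z.re ∧ z.re < Real.pi * (m + 1)}

/-! ### Reflection, entire functions and boundary values -/

section ComplexAnalysis

open Complex Topology

/-- Morera's theorem makes the real line removable for continuous functions: a rectangle crossing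
the line is cut along it, and Cauchy's theorem applies to both halves. -/
lemma differentiable_of_off_real {f : ℂ → ℂ} (hc : Continuous f)
    (hd : ∀ z : ℂ, z.im ≠ 0 → DifferentiableAt ℂ f z) : Differentiable ℂ f := by
  rw [← differentiableOn_univ]
  refine IsExactOn.differentiableOn isOpen_univ (IsConservativeOn.isExactOn_univ hc ?_)
  intro z w _
  rw [← add_eq_zero_iff_eq_neg, wedgeIntegral_add_wedgeIntegral_eq]
  have key : ∀ p : ℝ, (∫ x : ℝ in z.re..w.re, f (x + p * I)) -
      (∫ x : ℝ in z.re..w.re, f (x + (0 : ℝ) * I)) +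
      I • (∫ y : ℝ in p..0, f (w.re + y * I)) - I • (∫ y : ℝ in p..0, f (z.re + y * I)) = 0 := by
    intro p
    have := integral_boundary_rect_eq_zero_of_continuousOn_of_differentiableOn f
      (⟨z.re, p⟩ : ℂ) (⟨w.re, 0⟩ : ℂ) hc.continuousOn ?_
    · simpa using this
    · intro u hu
      refine (hd u ?_).differentiableWithinAt
      have h2 := hu.2
      simp only [mem_preimage, mem_Ioo] at h2
      rcases le_total p 0 with h | h
      · rw [max_eq_right h] at h2; exact h2.2.ne
      · rw [min_eq_right h] at h2; exact h2.1.ne'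
  have hi : ∀ c p q : ℝ, IntervalIntegrable (fun y : ℝ => f (c + y * I)) MeasureTheory.volume p q :=
    fun c p q => (hc.comp (by fun_prop)).intervalIntegrable _ _
  have h1 := key z.im
  have h2 := key w.im
  have s : ∀ c : ℝ, (∫ y : ℝ in z.im..w.im, f (c + y * I)) =
      (∫ y : ℝ in z.im..0, f (c + y * I)) - ∫ y : ℝ in w.im..0, f (c + y * I) := by
    intro c
    rw [intervalIntegral.integral_symm 0 w.im, sub_neg_eq_add,
      intervalIntegral.integral_add_adjacent_intervals (hi _ _ _) (hi _ _ _)]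
  rw [s, s]
  simp only [smul_eq_mul] at *
  linear_combination h1 - h2

/-- The Schwarz reflection principle on the closed upper half-plane. -/
lemma exists_reflection {f : ℂ → ℂ} (hc : Continuous f)
    (hd : ∀ z : ℂ, 0 < z.im → DifferentiableAt ℂ f z) (hr : ∀ x : ℝ, (f x).im = 0) :
    ∃ F : ℂ → ℂ, Differentiable ℂ F ∧ (∀ z : ℂ, 0 ≤ z.im → F z = f z) ∧
      ∀ z : ℂ, z.im < 0 → F z = (starRingEnd ℂ) (f ((starRingEnd ℂ) z)) := by
  refine ⟨fun z => if 0 ≤ z.im then f z else (starRingEnd ℂ) (f ((starRingEnd ℂ) z)), ?_,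
    fun z hz => if_pos hz, fun z hz => if_neg (not_le.2 hz)⟩
  apply differentiable_of_off_real
  · refine Continuous.if_le hc (continuous_conj.comp (hc.comp continuous_conj)) continuous_const
      continuous_im ?_
    intro z hz
    have hz' : (starRingEnd ℂ) z = z := conj_eq_iff_im.2 hz.symm
    have : ((z.re : ℝ) : ℂ) = z := by apply Complex.ext <;> simp [hz]
    rw [hz', eq_comm, conj_eq_iff_im, ← this]
    exact hr _
  · intro z hz
    rcases lt_or_gt_of_ne hz with h | h
    · have : DifferentiableAt ℂ (fun z => (starRingEnd ℂ) (f ((starRingEnd ℂ) z))) z := by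
        have := (hd ((starRingEnd ℂ) z) (by simpa using h)).conj_conj
        simpa [Function.comp_def] using this
      refine this.congr_of_eventuallyEq ?_
      filter_upwards [(isOpen_lt continuous_im continuous_const).mem_nhds h] with u hu
      exact if_neg (not_le.2 hu)
    · refine (hd z h).congr_of_eventuallyEq ?_
      filter_upwards [(isOpen_lt continuous_const continuous_im).mem_nhds h] with u hu
      exact if_pos (le_of_lt hu)

/-- Generalised Liouville theorem: by the Cauchy estimates all Taylor coefficients of degree
larger than `n` vanish. -/
lemma exists_polynomial_of_growth {f : ℂ → ℂ} (hf : Differentiable ℂ f) {n : ℕ} {C R₀ : ℝ}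
    (hb : ∀ z : ℂ, R₀ ≤ ‖z‖ → ‖f z‖ ≤ C * ‖z‖ ^ n) :
    ∃ p : Polynomial ℂ, ∀ z, p.eval z = f z := by
  have hzero : ∀ k, n < k → iteratedDeriv k f 0 = 0 := by
    intro k hk
    have h1 : ∀ᶠ R : ℝ in atTop, ‖iteratedDeriv k f 0‖ ≤
        (k.factorial * C) * R ^ (-(k - n : ℝ)) := by
      filter_upwards [eventually_ge_atTop R₀, eventually_gt_atTop 0] with R hR hR0
      have := norm_iteratedDeriv_le_of_forall_mem_sphere_norm_le (c := 0) (C := C * R ^ n) k hR0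
        hf.diffContOnCl (by
          intro z hz
          have hz' : ‖z‖ = R := by simpa using hz
          simpa [hz'] using hb z (by rw [hz']; exact hR))
      refine this.trans (le_of_eq ?_)
      rw [neg_sub, Real.rpow_sub hR0, Real.rpow_natCast, Real.rpow_natCast]
      ring
    have h2 : Tendsto (fun R : ℝ => (k.factorial * C) * R ^ (-(k - n : ℝ))) atTop (𝓝 0) := by
      have := (tendsto_rpow_neg_atTop (y := (k - n : ℝ)) (by
        have : (n : ℝ) < k := by exact_mod_cast hk
        linarith)).const_mul (k.factorial * C)
      simpa using this
    have := ge_of_tendsto h2 h1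
    simpa using le_antisymm this (norm_nonneg _)
  refine ⟨∑ k ∈ Finset.range (n + 1),
    Polynomial.monomial k ((k.factorial : ℂ)⁻¹ * iteratedDeriv k f 0), fun z => ?_⟩
  rw [← taylorSeries_eq_of_entire' 0 z hf, tsum_eq_sum (s := Finset.range (n + 1))]
  · rw [Polynomial.eval_finsetSum]
    simp
  · intro k hk
    rw [hzero k (by simpa using hk)]
    simp

/-- An entire function tending to infinity at infinity is a polynomial: `1 / f (1 / w)` has a
removable singularity at `0`, so that `f (1 / w)` has at most a pole there. -/
lemma exists_polynomial_of_tendsto {f : ℂ → ℂ} (hf : Differentiable ℂ f)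
    (ht : ∀ M : ℝ, ∃ R : ℝ, ∀ z : ℂ, R ≤ ‖z‖ → M ≤ ‖f z‖) :
    ∃ p : Polynomial ℂ, ∀ z, p.eval z = f z := by
  obtain ⟨R, hR⟩ := ht 1
  set g : ℂ → ℂ := fun w => (f w⁻¹)⁻¹ with hg
  have hsmall : ∀ w ∈ Metric.ball (0 : ℂ) (max R 1)⁻¹ \ {0}, 1 ≤ ‖f w⁻¹‖ := by
    intro w hw
    apply hR
    rw [norm_inv]
    have h0 : 0 < ‖w‖ := norm_pos_iff.2 hw.2
    have h1 : ‖w‖ < (max R 1)⁻¹ := by simpa using hw.1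
    exact (le_max_left R 1).trans (le_inv_of_le_inv₀ h0 h1.le)
  have hpos : 0 < (max R 1)⁻¹ := inv_pos.2 (lt_of_lt_of_le one_pos (le_max_right _ _))
  have hgd : DifferentiableOn ℂ g (Metric.ball (0 : ℂ) (max R 1)⁻¹ \ {0}) := by
    intro w hw
    refine DifferentiableAt.differentiableWithinAt ?_
    refine DifferentiableAt.inv ?_ ?_
    · exact (hf _).comp w (differentiableAt_inv hw.2)
    · intro h
      have := hsmall w hw
      rw [h] at this
      norm_num at this
  have hlim := differentiableOn_update_limUnder_of_bddAbove (Metric.ball_mem_nhds 0 hpos) hgd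
    ⟨1, by
      rintro _ ⟨w, hw, rfl⟩
      simp only [Function.comp_apply, hg, norm_inv]
      exact inv_le_one_of_one_le₀ (hsmall w hw)⟩
  have han : AnalyticAt ℂ (Function.update g 0 (limUnder (𝓝[≠] 0) g)) 0 :=
    hlim.analyticAt (Metric.ball_mem_nhds 0 hpos)
  have hmer : MeromorphicAt (fun w => f w⁻¹) 0 := by
    have h1 : MeromorphicAt g 0 := by
      refine han.meromorphicAt.congr ?_
      filter_upwards [self_mem_nhdsWithin] with w hw
      exact Function.update_of_ne hw _ _
    have h2 := h1.inv
    have : g⁻¹ = fun w => f w⁻¹ := by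
      funext w; simp [hg]
    rwa [this] at h2
  obtain ⟨n, hn⟩ := hmer
  have hb := hn.continuousAt.norm.eventually_le_const
    (lt_add_one ‖((0 : ℂ) - 0) ^ n • f (0 : ℂ)⁻¹‖)
  obtain ⟨δ, hδ, hδ'⟩ := Metric.eventually_nhds_iff.1 hb
  refine exists_polynomial_of_growth hf (n := n)
    (C := ‖((0 : ℂ) - 0) ^ n • f (0 : ℂ)⁻¹‖ + 1) (R₀ := 2 / δ) ?_
  intro z hz
  have hz0 : 0 < ‖z‖ := lt_of_lt_of_le (by positivity) hz
  have := @hδ' z⁻¹ (by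
    rw [dist_zero_right, norm_inv]
    refine inv_lt_of_inv_lt₀ hδ (lt_of_lt_of_le ?_ hz)
    rw [inv_eq_one_div]
    gcongr
    norm_num)
  simp only [sub_zero, inv_inv, smul_eq_mul, norm_mul, norm_pow, norm_inv] at this
  rw [inv_pow, inv_mul_le_iff₀ (by positivity)] at this
  simpa [mul_comm] using this

/-- Integrated Cauchy–Riemann equations: along a real segment on which `U` is real and next to
which `Im U ≥ 0`, the real part of `U` at the left end point is at most that at the right one. -/
lemma re_le_re_of_im_nonneg {U : ℂ → ℂ} (hc : Continuous U)
    (hd : ∀ z : ℂ, 0 < z.im → DifferentiableAt ℂ U z) {s t δ : ℝ} (hst : s ≤ t) (hδ : 0 < δ)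
    (hpos : ∀ x ∈ Icc s t, ∀ y ∈ Ioo 0 δ, 0 ≤ (U (x + y * I)).im)
    (hreal : ∀ x ∈ Icc s t, (U x).im = 0) : (U s).re ≤ (U t).re := by
  by_contra! hlt
  have hcont : Continuous fun y : ℝ => (U (s + y * I)).re - (U (t + y * I)).re := by fun_prop
  have h0 : 0 < (U (s + (0 : ℝ) * I)).re - (U (t + (0 : ℝ) * I)).re := by simpa using hlt
  obtain ⟨ε, hε, hε'⟩ := Metric.eventually_nhds_iff.1 (hcont.continuousAt.eventually_const_lt h0)
  set p := min (ε / 2) (δ / 2)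
  have hp : 0 < p := by positivity
  have hpε : p < ε := lt_of_le_of_lt (min_le_left _ _) (by linarith)
  have hpδ : p < δ := lt_of_le_of_lt (min_le_right _ _) (by linarith)
  have hC := integral_boundary_rect_eq_zero_of_continuousOn_of_differentiableOn U
      (⟨s, 0⟩ : ℂ) (⟨t, p⟩ : ℂ) hc.continuousOn (by
        intro u hu
        refine (hd u ?_).differentiableWithinAt
        have h2 := hu.2
        simp only [mem_preimage, mem_Ioo, min_eq_left hp.le] at h2
        exact h2.1)
  have hi : ∀ c p q : ℝ, IntervalIntegrable (fun y : ℝ => U (c + y * I)) MeasureTheory.volume p q :=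
    fun c p q => (hc.comp (by fun_prop)).intervalIntegrable _ _
  have hi' : ∀ c p q : ℝ, IntervalIntegrable (fun x : ℝ => U (x + c * I)) MeasureTheory.volume p q :=
    fun c p q => (hc.comp (by fun_prop)).intervalIntegrable _ _
  have imI : ∀ (g : ℝ → ℂ) (p q : ℝ), IntervalIntegrable g MeasureTheory.volume p q →
      (∫ x in p..q, g x).im = ∫ x in p..q, (g x).im := fun g p q h =>
    (intervalIntegral.intervalIntegral_im (𝕜 := ℂ) h).symm
  have reI : ∀ (g : ℝ → ℂ) (p q : ℝ), IntervalIntegrable g MeasureTheory.volume p q →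
      (∫ x in p..q, g x).re = ∫ x in p..q, (g x).re := fun g p q h =>
    (intervalIntegral.intervalIntegral_re (𝕜 := ℂ) h).symm
  have hC' := congrArg Complex.im hC
  simp only [add_im, sub_im, smul_eq_mul, I_mul_im, zero_im] at hC'
  rw [imI _ _ _ (hi' _ _ _), imI _ _ _ (hi' _ _ _), reI _ _ _ (hi _ _ _), reI _ _ _ (hi _ _ _)]
    at hC'
  have e1 : ∫ x in s..t, (U (x + (0 : ℝ) * I)).im = 0 := by
    rw [intervalIntegral.integral_congr (g := fun _ => (0 : ℝ)), intervalIntegral.integral_zero]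
    intro x hx
    rw [uIcc_of_le hst] at hx
    simpa using hreal x hx
  have e2 : 0 ≤ ∫ x in s..t, (U (x + p * I)).im :=
    intervalIntegral.integral_nonneg hst fun x hx => hpos x hx p ⟨hp, hpδ⟩
  have e3 : 0 < ∫ y in (0 : ℝ)..p, ((U (s + y * I)).re - (U (t + y * I)).re) := by
    refine intervalIntegral.intervalIntegral_pos_of_pos_on (hcont.intervalIntegrable _ _) ?_ hp
    intro y hy
    refine @hε' y ?_
    rw [Real.dist_eq, sub_zero, abs_of_pos hy.1]
    exact hy.2.trans hpε
  rw [intervalIntegral.integral_sub (Continuous.intervalIntegrable (by fun_prop) _ _)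
    (Continuous.intervalIntegrable (by fun_prop) _ _)] at e3
  linarith

/-- An injective holomorphic map which extends continuously to a boundary point sends that point
outside the image, because it is open. -/
lemma boundary_notMem_image {D : Set ℂ} (hD : IsOpen D) (hconn : IsPreconnected D) {φ : ℂ → ℂ}
    (hcont : ContinuousOn φ (closure D)) (hd : DifferentiableOn ℂ φ D) (hinj : InjOn φ D)
    {z : ℂ} (hz : z ∈ closure D) (hzD : z ∉ D) : φ z ∉ φ '' D := by
  rintro ⟨w, hw, hwz⟩
  have hne : z ≠ w := fun h => hzD (h ▸ hw)
  obtain ⟨V, U, hV, hU, hzV, hwU, hdisj⟩ := t2_separation hne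
  have hopen : IsOpen (φ '' (D ∩ U)) := by
    rcases (hd.analyticOnNhd hD).is_constant_or_isOpen hconn with ⟨c, hc⟩ | h
    · exfalso
      obtain ⟨ε, hε, hε'⟩ := Metric.isOpen_iff.1 hD w hw
      have hw2 : w + (ε / 2 : ℝ) ∈ D := hε' (by
        simp only [Metric.mem_ball, dist_self_add_left, norm_real, Real.norm_eq_abs]
        rw [abs_of_pos (by linarith)]; linarith)
      have := hinj hw hw2 (by rw [hc _ hw, hc _ hw2])
      have h3 : ((ε / 2 : ℝ) : ℂ) = 0 := by linear_combination -this
      rw [ofReal_eq_zero] at h3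
      linarith
    · exact h _ inter_subset_left (hD.inter hU)
  have hmem : φ '' (D ∩ U) ∈ 𝓝 (φ z) := hopen.mem_nhds ⟨w, ⟨hw, hwU⟩, hwz⟩
  have h1 : ∀ᶠ u in 𝓝[D] z, φ u ∈ φ '' (D ∩ U) :=
    ((hcont z hz).mono_left (nhdsWithin_mono _ subset_closure)) hmem
  have : (𝓝[D] z).NeBot := mem_closure_iff_nhdsWithin_neBot.1 hz
  obtain ⟨u, ⟨v, hv, hvu⟩, huV, huD⟩ := (h1.and ((eventually_nhdsWithin_of_eventually_nhds
    (hV.mem_nhds hzV)).and self_mem_nhdsWithin)).exists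
  have : v = u := hinj hv.1 huD hvu
  exact Set.disjoint_left.1 hdisj huV (this ▸ hv.2)

end ComplexAnalysis

/-! ### Monotone functions and the square root -/

/-- A continuous real function that is increasing across every interval on which it avoids a finite
set of values is increasing: a descent would have to cross a whole interval of values outside the set. -/
lemma monotone_of_avoid {θ : ℝ → ℝ} (hc : Continuous θ) {S : Set ℝ} (hS : S.Finite)
    (h : ∀ s t, s ≤ t → (∀ u ∈ Icc s t, θ u ∉ S) → θ s ≤ θ t) : Monotone θ := by
  intro s t hst
  by_contra! hlt
  obtain ⟨v, hv, hvS⟩ := ((Ioo_infinite hlt).sdiff hS).nonempty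
  obtain ⟨ε, hε, hball⟩ := Metric.nhds_basis_closedBall.mem_iff.1
    ((isOpen_Ioo.sdiff hS.isClosed).mem_nhds (⟨hv, hvS⟩ : v ∈ Ioo (θ t) (θ s) \ S))
  rw [Real.closedBall_eq_Icc] at hball
  have hl : v - ε ∈ Ioo (θ t) (θ s) := (hball ⟨le_rfl, by linarith⟩).1
  have hu : v + ε ∈ Ioo (θ t) (θ s) := (hball ⟨by linarith, le_rfl⟩).1
  -- The first time at which `θ` is at most `v - ε`.
  obtain ⟨t₁, ⟨ht₁, htle⟩, htmin⟩ := (isCompact_Icc.inter_right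
    (isClosed_le hc continuous_const) : IsCompact (Icc s t ∩ {u | θ u ≤ v - ε})).exists_isLeast
      ⟨t, right_mem_Icc.2 hst, hl.1.le⟩
  have hteq : θ t₁ = v - ε := by
    obtain ⟨u, hu1, hu2⟩ := intermediate_value_Icc' ht₁.1 hc.continuousOn ⟨htle, hl.2.le⟩
    have : t₁ ≤ u := htmin ⟨⟨hu1.1, hu1.2.trans ht₁.2⟩, hu2.le⟩
    rw [← hu2, le_antisymm this hu1.2]
  -- The last time before `t₁` at which `θ` is at least `v + ε`.
  obtain ⟨s₁, ⟨hs₁, hsle⟩, hsmax⟩ := (isCompact_Icc.inter_right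
    (isClosed_le continuous_const hc) : IsCompact (Icc s t₁ ∩ {u | v + ε ≤ θ u})).exists_isGreatest
      ⟨s, left_mem_Icc.2 ht₁.1, hu.2.le⟩
  have hseq : θ s₁ = v + ε := by
    obtain ⟨u, hu1, hu2⟩ := intermediate_value_Icc' hs₁.2 hc.continuousOn
      (⟨by rw [hteq]; linarith, hsle⟩ : v + ε ∈ Icc (θ t₁) (θ s₁))
    have : u ≤ s₁ := hsmax ⟨⟨hs₁.1.trans hu1.1, hu1.2⟩, hu2.ge⟩
    rw [← hu2, le_antisymm this hu1.1]
  have := h s₁ t₁ hs₁.2 (fun u hu => by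
    refine (hball ⟨?_, ?_⟩).2
    · rcases hu.2.eq_or_lt with h | h
      · rw [h, hteq]
      · by_contra! hlt
        exact absurd (htmin ⟨⟨hs₁.1.trans hu.1, hu.2.trans ht₁.2⟩, hlt.le⟩) (not_le.2 h)
    · rcases hu.1.eq_or_lt with h | h
      · rw [← h, hseq]
      · by_contra! hlt
        exact absurd (hsmax ⟨⟨hs₁.1.trans hu.1, hu.2⟩, hlt.le⟩) (not_le.2 h))
  linarith

lemma lt_or_gt_on_Icc {θ : ℝ → ℝ} {s t c : ℝ} (hc : ContinuousOn θ (Icc s t))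
    (h : ∀ u ∈ Icc s t, θ u ≠ c) :
    (∀ u ∈ Icc s t, θ u < c) ∨ ∀ u ∈ Icc s t, c < θ u := by
  by_contra! hcon
  obtain ⟨⟨u, hu, hcu⟩, v, hv, hvc⟩ := hcon
  obtain ⟨w, hw, hwc⟩ := isPreconnected_Icc.intermediate_value hv hu hc ⟨hvc, hcu⟩
  exact h w hw hwc

/-- The branch of the square root with values in the closed first quadrant. The formula is
continuous on all of `ℂ` and is a square root on the closed upper half-plane only. -/
noncomputable def qsqrt (w : ℂ) : ℂ :=
  (√((‖w‖ + w.re) / 2) : ℝ) + (√((‖w‖ - w.re) / 2) : ℝ) * Complex.I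

lemma qsqrt_re (w : ℂ) : (qsqrt w).re = √((‖w‖ + w.re) / 2) := by simp [qsqrt]

lemma qsqrt_im (w : ℂ) : (qsqrt w).im = √((‖w‖ - w.re) / 2) := by simp [qsqrt]

lemma continuous_qsqrt : Continuous qsqrt := by
  unfold qsqrt; fun_prop

lemma qsqrt_sq {w : ℂ} (hw : 0 ≤ w.im) : qsqrt w ^ 2 = w := by
  have h1 : 0 ≤ (‖w‖ + w.re) / 2 := by linarith [neg_abs_le w.re, Complex.abs_re_le_norm w]
  have h2 : 0 ≤ (‖w‖ - w.re) / 2 := by linarith [le_abs_self w.re, Complex.abs_re_le_norm w]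
  have h3 : √((‖w‖ + w.re) / 2) * √((‖w‖ - w.re) / 2) = w.im / 2 := by
    rw [← Real.sqrt_mul h1, Real.sqrt_eq_iff_mul_self_eq (mul_nonneg h1 h2) (by linarith)]
    have := Complex.sq_norm w
    rw [Complex.normSq_apply] at this
    linear_combination this / 4
  apply Complex.ext
  · rw [sq, Complex.mul_re, qsqrt_re, qsqrt_im, Real.mul_self_sqrt h1, Real.mul_self_sqrt h2]
    ring
  · rw [sq, Complex.mul_im, qsqrt_re, qsqrt_im]
    linear_combination 2 * h3

lemma qsqrt_re_nonneg (w : ℂ) : 0 ≤ (qsqrt w).re := by rw [qsqrt_re]; positivity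

lemma qsqrt_im_nonneg (w : ℂ) : 0 ≤ (qsqrt w).im := by rw [qsqrt_im]; positivity

lemma qsqrt_mem_Q {w : ℂ} (hw : 0 < w.im) : qsqrt w ∈ Q := by
  have h := qsqrt_sq hw.le
  have h' := congrArg Complex.im h
  rw [sq, Complex.mul_im] at h'
  have h1 := qsqrt_re_nonneg w
  have h2 := qsqrt_im_nonneg w
  constructor
  · rcases h1.eq_or_lt with h | h
    · rw [← h] at h'; simp at h'; linarith
    · exact h
  · rcases h2.eq_or_lt with h | h
    · rw [← h] at h'; simp at h'; linarith
    · exact h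

lemma qsqrt_of_sq {z : ℂ} (h1 : 0 ≤ z.re) (h2 : 0 ≤ z.im) : qsqrt (z ^ 2) = z := by
  have hn : ‖z ^ 2‖ = z.re ^ 2 + z.im ^ 2 := by
    rw [norm_pow, Complex.sq_norm, Complex.normSq_apply]; ring
  have hr : (z ^ 2).re = z.re ^ 2 - z.im ^ 2 := by rw [sq, Complex.mul_re]; ring
  apply Complex.ext
  · rw [qsqrt_re, hn, hr, Real.sqrt_eq_iff_mul_self_eq (by nlinarith) h1]; ring
  · rw [qsqrt_im, hn, hr, Real.sqrt_eq_iff_mul_self_eq (by nlinarith) h2]; ring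

lemma qsqrt_ofReal_im {t : ℝ} (ht : 0 ≤ t) : (qsqrt t).im = 0 := by
  rw [qsqrt_im]; simp [abs_of_nonneg ht]

lemma qsqrt_ofReal_re {t : ℝ} (ht : t ≤ 0) : (qsqrt t).re = 0 := by
  rw [qsqrt_re]; simp [abs_of_nonpos ht]

lemma differentiableAt_qsqrt {w : ℂ} (hw : 0 < w.im) : DifferentiableAt ℂ qsqrt w := by
  have hne : qsqrt w ≠ 0 := fun h => by
    have := (qsqrt_mem_Q hw).1
    rw [h] at this
    simp at this
  refine (HasDerivAt.of_local_left_inverse (f := fun z => z ^ 2) (f' := 2 * qsqrt w)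
    continuous_qsqrt.continuousAt ?_ (by simpa using hne) ?_).differentiableAt
  · simpa using hasDerivAt_pow 2 (qsqrt w)
  · filter_upwards [(isOpen_lt continuous_const Complex.continuous_im).mem_nhds hw] with u hu
    exact qsqrt_sq (le_of_lt hu)

lemma closure_Q : closure Q = {z : ℂ | 0 ≤ z.re ∧ 0 ≤ z.im} := by
  have : Q = Ioi 0 ×ℂ Ioi 0 := by ext; simp [Q, Complex.mem_reProdIm]
  rw [this, Complex.closure_reProdIm, closure_Ioi]
  ext; simp [Complex.mem_reProdIm]

lemma isOpen_Q : IsOpen Q :=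
  (isOpen_lt continuous_const Complex.continuous_re).inter
    (isOpen_lt continuous_const Complex.continuous_im)

lemma isPreconnected_Q : IsPreconnected Q := by
  exact ((convex_halfSpace_re_gt 0).inter (convex_halfSpace_im_gt 0)).isPreconnected

/-! ### The boundary of the region -/

lemma continuous_gB {B : ℝ} : Continuous (gB B) := by
  unfold gB
  refine Continuous.if_le continuous_const ?_ continuous_id continuous_const ?_
  · exact Real.continuous_arccos.comp
      (continuous_const.div Real.continuous_cosh fun y => (Real.cosh_pos y).ne')
  · rintro y rfl
    rw [div_self (Real.cosh_pos _).ne', Real.arccos_one]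

lemma gB_nonneg (B y : ℝ) : 0 ≤ gB B y := by
  unfold gB; split_ifs
  · exact le_rfl
  · exact Real.arccos_nonneg _

lemma gB_lt (B y : ℝ) : gB B y < Real.pi / 2 := by
  unfold gB; split_ifs
  · positivity
  · exact Real.arccos_lt_pi_div_two.2 (div_pos (Real.cosh_pos _) (Real.cosh_pos _))

lemma gB_of_le {B y : ℝ} (h : y ≤ B) : gB B y = 0 := if_pos h

lemma cosh_div_le_one {B y : ℝ} (hB : 0 < B) (h : B ≤ y) : Real.cosh B / Real.cosh y ≤ 1 := by
  rw [div_le_one (Real.cosh_pos _), Real.cosh_le_cosh, abs_of_pos hB, abs_of_pos (hB.trans_le h)]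
  exact h

lemma gB_of_ge {B y : ℝ} (h : B ≤ y) : gB B y = Real.arccos (Real.cosh B / Real.cosh y) := by
  unfold gB; split_ifs with h'
  · rw [le_antisymm h' h, div_self (Real.cosh_pos _).ne', Real.arccos_one]
  · rfl

lemma cos_gB_mul_cosh {B y : ℝ} (hB : 0 < B) (h : B ≤ y) :
    Real.cos (gB B y) * Real.cosh y = Real.cosh B := by
  rw [gB_of_ge h, Real.cos_arccos _ (cosh_div_le_one hB h),
    div_mul_cancel₀ _ (Real.cosh_pos _).ne']
  have := div_pos (Real.cosh_pos B) (Real.cosh_pos y)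
  linarith

lemma gB_strictMonoOn {B : ℝ} (hB : 0 < B) : StrictMonoOn (gB B) (Ici B) := by
  intro y hy z hz hyz
  rw [gB_of_ge hy, gB_of_ge hz]
  have h1 := div_pos (Real.cosh_pos B) (Real.cosh_pos z)
  have h2 := div_pos (Real.cosh_pos B) (Real.cosh_pos y)
  apply Real.strictAntiOn_arccos ⟨by linarith, cosh_div_le_one hB hz⟩
    ⟨by linarith, cosh_div_le_one hB hy⟩
  have : Real.cosh y < Real.cosh z := by
    rw [Real.cosh_lt_cosh, abs_of_pos (hB.trans_le hy), abs_of_pos (hB.trans_le hz)]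
    exact hyz
  exact div_lt_div_of_pos_left (Real.cosh_pos _) (Real.cosh_pos _) this

lemma gB_monotone {B : ℝ} (hB : 0 < B) : Monotone (gB B) := by
  intro y z hyz
  rcases le_total y B with h | h
  · rw [gB_of_le h]; exact gB_nonneg _ _
  · exact (gB_strictMonoOn hB).monotoneOn h (h.trans hyz : B ≤ z) hyz

/-- The closed set which contains the closure of `Ω_{B,m}`, with `M` in place of `π(m+1)`. -/
def ΩClosed (B M : ℝ) : Set ℂ := {z | 0 ≤ z.im ∧ gB B z.im ≤ z.re ∧ z.re ≤ M}

/-- The region `Ω_{B,m}` with `M` in place of `π(m+1)`. -/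
def ΩOpen (B M : ℝ) : Set ℂ := {z | 0 < z.im ∧ gB B z.im < z.re ∧ z.re < M}

lemma closure_ΩOpen_subset (B M : ℝ) : closure (ΩOpen B M) ⊆ ΩClosed B M := by
  refine closure_minimal (fun z hz => ⟨hz.1.le, hz.2.1.le, hz.2.2.le⟩) ?_
  exact (isClosed_le continuous_const Complex.continuous_im).inter
    ((isClosed_le (continuous_gB.comp Complex.continuous_im) Complex.continuous_re).inter
      (isClosed_le Complex.continuous_re continuous_const))

/-- A continuous function on the plane which parametrises the boundary of the region from left to
right: it is `-Im` on the curve and on the left segment, `Re` on the bottom side and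
`M + Im + g_B(Im)` on the right side. The clamped factor interpolates between the signs `-1` for
`Re ≤ π/2` and `+1` for `Re ≥ π`. -/
noncomputable def bdParam (B : ℝ) (z : ℂ) : ℝ :=
  z.re + max (-1) (min 1 (4 * z.re / Real.pi - 3)) * (z.im + gB B z.im)

lemma continuous_bdParam (B : ℝ) : Continuous (bdParam B) := by
  unfold bdParam
  have := continuous_gB (B := B)
  fun_prop

lemma bdParam_left {B : ℝ} {z : ℂ} (h : z.re = gB B z.im) : bdParam B z = -z.im := by
  have h1 : 4 * z.re / Real.pi - 3 ≤ -1 := by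
    have := gB_lt B z.im
    rw [← h] at this
    rw [sub_le_iff_le_add, div_le_iff₀ Real.pi_pos]
    linarith
  rw [bdParam, min_eq_right (h1.trans (by norm_num)), max_eq_left h1, h]
  ring

lemma bdParam_bottom {B : ℝ} (hB : 0 < B) {z : ℂ} (h : z.im = 0) : bdParam B z = z.re := by
  rw [bdParam, h, gB_of_le hB.le]; ring

lemma bdParam_right {B M : ℝ} (hM : Real.pi ≤ M) {z : ℂ} (h : z.re = M) :
    bdParam B z = M + z.im + gB B z.im := by
  have h1 : 1 ≤ 4 * z.re / Real.pi - 3 := by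
    rw [le_sub_iff_add_le, le_div_iff₀ Real.pi_pos, h]
    linarith
  rw [bdParam, min_eq_left h1, max_eq_right (by norm_num), h]
  ring

lemma boundary_cases {B M : ℝ} (hB : 0 < B) (hM : Real.pi ≤ M) {z : ℂ} (hz : z ∈ ΩClosed B M)
    (hz' : z ∉ ΩOpen B M) :
    (z.re = gB B z.im ∧ bdParam B z = -z.im) ∨ (z.im = 0 ∧ bdParam B z = z.re) ∨
      (z.re = M ∧ bdParam B z = M + z.im + gB B z.im) := by
  obtain ⟨h1, h2, h3⟩ := hz
  rcases h2.eq_or_lt with h | h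
  · exact Or.inl ⟨h.symm, bdParam_left h.symm⟩
  rcases h1.eq_or_lt with h' | h'
  · exact Or.inr (Or.inl ⟨h'.symm, bdParam_bottom hB h'.symm⟩)
  rcases h3.eq_or_lt with h'' | h''
  · exact Or.inr (Or.inr ⟨h'', bdParam_right hM h''⟩)
  · exact absurd ⟨h', h, h''⟩ hz'

/-- The function `1 - cos ζ / cosh B`. -/
noncomputable def target (B : ℝ) (ζ : ℂ) : ℂ := 1 - (1 / (Real.cosh B : ℂ)) * Complex.cos ζ

lemma cos_re_eq (ζ : ℂ) : (Complex.cos ζ).re = Real.cos ζ.re * Real.cosh ζ.im := by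
  conv_lhs => rw [Complex.cos_eq ζ]
  simp [← Complex.ofReal_cos, ← Complex.ofReal_cosh, ← Complex.ofReal_sin, ← Complex.ofReal_sinh]

lemma cos_im_eq (ζ : ℂ) : (Complex.cos ζ).im = -(Real.sin ζ.re * Real.sinh ζ.im) := by
  conv_lhs => rw [Complex.cos_eq ζ]
  simp [← Complex.ofReal_cos, ← Complex.ofReal_cosh, ← Complex.ofReal_sin, ← Complex.ofReal_sinh]

lemma target_re (B : ℝ) (ζ : ℂ) :
    (target B ζ).re = 1 - Real.cos ζ.re * Real.cosh ζ.im / Real.cosh B := by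
  rw [target, ← Complex.ofReal_one, ← Complex.ofReal_div, Complex.sub_re, Complex.re_ofReal_mul,
    cos_re_eq, Complex.ofReal_re]
  ring

lemma target_im (B : ℝ) (ζ : ℂ) :
    (target B ζ).im = Real.sin ζ.re * Real.sinh ζ.im / Real.cosh B := by
  rw [target, ← Complex.ofReal_one, ← Complex.ofReal_div, Complex.sub_im, Complex.im_ofReal_mul,
    cos_im_eq, Complex.ofReal_im]
  ring

lemma differentiable_target (B : ℝ) : Differentiable ℂ (target B) := by
  unfold target; fun_prop

/-- The target function has nonnegative real part on the part of the region left of `π`. -/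
lemma target_re_nonneg {B M : ℝ} (hB : 0 < B) {ζ : ℂ} (hζ : ζ ∈ ΩClosed B M)
    (hπ : ζ.re ≤ Real.pi) : 0 ≤ (target B ζ).re := by
  rw [target_re, sub_nonneg, div_le_one (Real.cosh_pos _)]
  obtain ⟨h1, h2, -⟩ := hζ
  rcases le_total ζ.im B with h | h
  · calc Real.cos ζ.re * Real.cosh ζ.im ≤ 1 * Real.cosh ζ.im :=
        mul_le_mul_of_nonneg_right (Real.cos_le_one _) (Real.cosh_pos _).le
      _ ≤ Real.cosh B := by
        rw [one_mul, Real.cosh_le_cosh, abs_of_nonneg h1, abs_of_pos hB]; exact h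
  · rw [← cos_gB_mul_cosh hB h]
    exact mul_le_mul_of_nonneg_right
      (Real.cos_le_cos_of_nonneg_of_le_pi (gB_nonneg _ _) hπ h2) (Real.cosh_pos _).le

/-- The boundary of the half-plane is carried monotonically along the boundary of the region.
On each open side some holomorphic function of `Φ` is real and has nonnegative imaginary part
nearby, so that its real part increases. -/
lemma monotone_bdParam {B M : ℝ} (hB : 0 < B) (hM : Real.pi ≤ M) {Φ : ℂ → ℂ} (hc : Continuous Φ)
    (hd : ∀ w : ℂ, 0 < w.im → DifferentiableAt ℂ Φ w) (hΦ : ∀ w, Φ w ∈ ΩClosed B M)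
    (hbd : ∀ t : ℝ, Φ t ∉ ΩOpen B M) : Monotone fun t : ℝ => bdParam B (Φ t) := by
  have hθ : Continuous fun t : ℝ => bdParam B (Φ t) :=
    (continuous_bdParam B).comp (hc.comp Complex.continuous_ofReal)
  refine monotone_of_avoid hθ (S := {-B, 0, M}) (by simp) ?_
  intro s t hst hS
  simp only [mem_insert_iff, mem_singleton_iff, not_or] at hS
  have hs : s ∈ Icc s t := left_mem_Icc.2 hst
  have ht : t ∈ Icc s t := right_mem_Icc.2 hst
  have hcases := fun u : ℝ => boundary_cases hB hM (hΦ u) (hbd u)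
  have hM0 : 0 < M := Real.pi_pos.trans_le hM
  rcases lt_or_gt_on_Icc hθ.continuousOn (fun u hu => (hS u hu).1) with h1 | h1
  · -- The curve: `i (1 - cos Φ / cosh B)` is real there, and its real part is
    -- `-sin (Re Φ) sinh (Im Φ) / cosh B`, a decreasing function of `Im Φ`.
    have hu : ∀ u ∈ Icc s t, (Φ u).re = gB B (Φ u).im ∧ bdParam B (Φ u) = -(Φ u).im ∧
        B < (Φ u).im := by
      intro u hu
      have h := h1 u hu
      have hΦu := hΦ u
      rcases hcases u with h' | h' | h'
      · exact ⟨h'.1, h'.2, by linarith⟩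
      · have := gB_nonneg B (Φ u).im
        linarith [hΦu.2.1]
      · have := gB_nonneg B (Φ u).im
        linarith [hΦu.1]
    -- By compactness `Φ` stays left of `π` next to the segment
    obtain ⟨V, W, -, hW, hV, h0W, hVW⟩ := generalized_tube_lemma (isCompact_Icc (a := s) (b := t))
      (isCompact_singleton (x := (0 : ℝ)))
      (n := {p : ℝ × ℝ | (Φ (p.1 + p.2 * Complex.I)).re < Real.pi})
      (isOpen_lt (by fun_prop) continuous_const) (by
        rintro ⟨u, v⟩ ⟨hu1, hv⟩
        simp only [mem_singleton_iff] at hv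
        subst hv
        have h2 := (hu u hu1).1
        have h3 := gB_lt B (Φ u).im
        simp only [mem_ofPred_eq, Complex.ofReal_zero, zero_mul, add_zero]
        rw [h2]
        linarith [Real.pi_pos])
    obtain ⟨δ, hδ, hδW⟩ := Metric.isOpen_iff.1 hW 0 (h0W rfl)
    have := re_le_re_of_im_nonneg (U := fun w => Complex.I * target B (Φ w)) (δ := δ)
      (continuous_const.mul ((differentiable_target B).continuous.comp hc))
      (fun w hw => ((differentiable_target B _).comp w (hd w hw)).const_mul _) hst hδ
      (by
        intro x hx y hy
        rw [Complex.I_mul_im]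
        refine target_re_nonneg hB (hΦ _) (le_of_lt ?_)
        exact @hVW (x, y) ⟨hV hx, hδW (by
          rw [Metric.mem_ball, Real.dist_eq, sub_zero, abs_of_pos hy.1]; exact hy.2)⟩)
      (by
        intro x hx
        rw [Complex.I_mul_im, target_re, (hu x hx).1, cos_gB_mul_cosh hB (hu x hx).2.2.le,
          div_self (Real.cosh_pos _).ne', sub_self])
    simp only [Complex.I_mul_re, target_im] at this
    show bdParam B (Φ s) ≤ bdParam B (Φ t)
    rw [(hu s hs).2.1, (hu t ht).2.1]
    by_contra! hlt
    have hlt' : (Φ s).im < (Φ t).im := by linarith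
    have hBs := (hu s hs).2.2
    have h3 : gB B (Φ s).im < gB B (Φ t).im :=
      gB_strictMonoOn hB (mem_Ici.2 hBs.le) (mem_Ici.2 (hBs.trans hlt').le) hlt'
    rw [neg_le_neg_iff, div_le_div_iff_of_pos_right (Real.cosh_pos _), (hu s hs).1, (hu t ht).1]
      at this
    have h4 : Real.sin (gB B (Φ s).im) < Real.sin (gB B (Φ t).im) :=
      Real.sin_lt_sin_of_lt_of_le_pi_div_two (by linarith [gB_nonneg B (Φ s).im, Real.pi_pos])
        (gB_lt _ _).le h3
    have h5 : Real.sinh (Φ s).im < Real.sinh (Φ t).im := Real.sinh_lt_sinh.2 hlt'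
    have h6 : 0 < Real.sinh (Φ s).im := Real.sinh_pos_iff.2 (hB.trans hBs)
    have h7 : 0 ≤ Real.sin (gB B (Φ s).im) := Real.sin_nonneg_of_nonneg_of_le_pi (gB_nonneg _ _)
      (by linarith [gB_lt B (Φ s).im, Real.pi_pos])
    nlinarith
  rcases lt_or_gt_on_Icc hθ.continuousOn (fun u hu => (hS u hu).2.1) with h2 | h2
  · -- The left segment, where `iΦ` is real.
    have hu : ∀ u ∈ Icc s t, (Φ u).re = 0 ∧ bdParam B (Φ u) = -(Φ u).im := by
      intro u hu
      have h := h1 u hu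
      have h' := h2 u hu
      have hΦu := hΦ u
      have hg := gB_nonneg B (Φ u).im
      rcases hcases u with hh | hh | hh
      · exact ⟨by rw [hh.1, gB_of_le (by linarith)], hh.2⟩
      · linarith [hΦu.2.1]
      · linarith [hΦu.1]
    have := re_le_re_of_im_nonneg (U := fun w => Complex.I * Φ w) (δ := 1)
      (continuous_const.mul hc) (fun w hw => (hd w hw).const_mul _) hst one_pos
      (by
        intro x hx y hy
        rw [Complex.I_mul_im]
        exact (gB_nonneg _ _).trans (hΦ _).2.1)
      (by
        intro x hx
        rw [Complex.I_mul_im, (hu x hx).1])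
    simp only [Complex.I_mul_re] at this
    show bdParam B (Φ s) ≤ bdParam B (Φ t)
    rwa [(hu s hs).2, (hu t ht).2]
  rcases lt_or_gt_on_Icc hθ.continuousOn (fun u hu => (hS u hu).2.2) with h3 | h3
  · -- The bottom side, where `Φ` itself is real.
    have hu : ∀ u ∈ Icc s t, (Φ u).im = 0 ∧ bdParam B (Φ u) = (Φ u).re := by
      intro u hu
      have h := h2 u hu
      have h' := h3 u hu
      have hΦu := hΦ u
      have hg := gB_nonneg B (Φ u).im
      rcases hcases u with hh | hh | hh
      · linarith [hΦu.1]
      · exact hh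
      · linarith [hΦu.1]
    have := re_le_re_of_im_nonneg (δ := 1) hc hd hst one_pos
      (fun x hx y hy => (hΦ _).1) (fun x hx => (hu x hx).1)
    show bdParam B (Φ s) ≤ bdParam B (Φ t)
    rwa [(hu s hs).2, (hu t ht).2]
  · -- The right side, where `i (M - Φ)` is real.
    have hu : ∀ u ∈ Icc s t, (Φ u).re = M ∧ bdParam B (Φ u) = M + (Φ u).im + gB B (Φ u).im := by
      intro u hu
      have h := h3 u hu
      have hΦu := hΦ u
      rcases hcases u with hh | hh | hh
      · linarith [hΦu.1]
      · linarith [hΦu.2.2]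
      · exact hh
    have := re_le_re_of_im_nonneg (U := fun w => Complex.I * (M - Φ w)) (δ := 1)
      (continuous_const.mul (continuous_const.sub hc))
      (fun w hw => ((hd w hw).const_sub _).const_mul _) hst one_pos
      (by
        intro x hx y hy
        rw [Complex.I_mul_im, Complex.sub_re, Complex.ofReal_re]
        linarith [(hΦ (x + y * Complex.I)).2.2])
      (by
        intro x hx
        rw [Complex.I_mul_im, Complex.sub_re, Complex.ofReal_re, (hu x hx).1, sub_self])
    simp only [Complex.I_mul_re, Complex.sub_im, Complex.ofReal_im] at this
    show bdParam B (Φ s) ≤ bdParam B (Φ t)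
    rw [(hu s hs).2, (hu t ht).2]
    have hle : (Φ s).im ≤ (Φ t).im := by linarith
    linarith [gB_monotone hB hle]

/-! ### Polynomials: real coefficients, the extremal property and the degree -/

lemma exists_real_polynomial {p : Polynomial ℂ} (h : ∀ x : ℝ, (p.eval (x : ℂ)).im = 0) :
    ∃ q : Polynomial ℝ, q.map (algebraMap ℝ ℂ) = p := by
  have hconj : p.map (starRingEnd ℂ) = p := by
    apply Polynomial.eq_of_infinite_eval_eq
    refine (infinite_range_of_injective Complex.ofReal_injective).mono ?_
    rintro _ ⟨x, rfl⟩
    show Polynomial.eval (x : ℂ) (p.map (starRingEnd ℂ)) = Polynomial.eval (x : ℂ) p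
    have h1 : Polynomial.eval ((starRingEnd ℂ) (x : ℂ)) (p.map (starRingEnd ℂ)) =
        (starRingEnd ℂ) (Polynomial.eval (x : ℂ) p) := by
      rw [Polynomial.eval_map, Polynomial.eval₂_hom]
    rw [Complex.conj_ofReal] at h1
    rw [h1, Complex.conj_eq_iff_im, h x]
  have : p ∈ Polynomial.lifts (algebraMap ℝ ℂ) := by
    rw [Polynomial.lifts_iff_coeff_lifts]
    intro n
    have h1 := congrArg (fun q => Polynomial.coeff q n) hconj
    simp only [Polynomial.coeff_map] at h1
    exact ⟨(p.coeff n).re, Complex.conj_eq_iff_re.1 h1⟩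
  exact (Polynomial.mem_lifts _).1 this

/-- Chebyshev alternation: an odd polynomial which equioscillates around `1` at `m + 2` points of
`[a,1]` bounds from below the error of every competitor. If `p` were better, the odd part of
`P - p` would have `m + 1` positive zeros, hence `2m + 3` zeros altogether. -/
lemma alternation_lower_bound {m : ℕ} {a r₀ r : ℝ} (ha0 : 0 < a) {P p : Polynomial ℝ}
    (hP : P.natDegree ≤ 2 * m + 1) (hp : p.natDegree ≤ 2 * m + 1)
    (hodd : ∀ x : ℝ, P.eval (-x) = -P.eval x) {x : ℕ → ℝ}
    (hx : ∀ k ≤ m + 1, x k ∈ Icc a 1) (hmono : ∀ k ≤ m, x k < x (k + 1))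
    (hPx : ∀ k ≤ m + 1, P.eval (x k) = 1 - (-1) ^ k * r₀)
    (hr : ∀ y ∈ X a, |p.eval y - Real.sign y| ≤ r) : r₀ ≤ r := by
  by_contra! hlt
  -- Twice the odd part of `P - p`.
  set d : Polynomial ℝ := 2 * P - p + p.comp (-Polynomial.X) with hd
  have hdeval : ∀ y, d.eval y = 2 * P.eval y - p.eval y + p.eval (-y) := by
    intro y; simp [hd]
  have hdodd : ∀ y, d.eval (-y) = -d.eval y := by
    intro y; rw [hdeval, hdeval, hodd, neg_neg]; ring
  have hddeg : d.natDegree ≤ 2 * m + 1 := by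
    refine (Polynomial.natDegree_add_le _ _).trans (max_le ?_ ?_)
    · refine (Polynomial.natDegree_sub_le _ _).trans (max_le ?_ hp)
      refine (Polynomial.natDegree_mul_le).trans ?_
      have : (2 : Polynomial ℝ).natDegree = 0 := Polynomial.natDegree_ofNat 2
      omega
    · refine Polynomial.natDegree_comp_le.trans ?_
      rw [Polynomial.natDegree_neg, Polynomial.natDegree_X, mul_one]
      exact hp
  have hsign : ∀ k ≤ m + 1, (-1 : ℝ) ^ k * d.eval (x k) < 0 := by
    intro k hk
    have hxk := hx k hk
    have hpos : 0 < x k := ha0.trans_le hxk.1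
    have h1 := abs_le.1 (hr (x k) (Or.inr hxk))
    have h2 := abs_le.1 (hr (-x k) (Or.inl ⟨by linarith [hxk.2], by linarith [hxk.1]⟩))
    rw [Real.sign_of_pos hpos] at h1
    rw [Real.sign_of_neg (by linarith)] at h2
    rw [hdeval, hPx k hk]
    rcases neg_one_pow_eq_or ℝ k with h | h <;> rw [h] <;> linarith
  have hzero : ∀ k, ∃ y : ℝ, k ≤ m → x k < y ∧ y < x (k + 1) ∧ d.eval y = 0 := by
    intro k
    by_cases hk : k ≤ m
    · have h1 := hsign k (by omega)
      have h2 := hsign (k + 1) (by omega)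
      have hle := (hmono k hk).le
      rw [pow_succ] at h2
      rcases neg_one_pow_eq_or ℝ k with h | h
      · rw [h] at h1 h2
        obtain ⟨y, hy, hy0⟩ := intermediate_value_Ioo hle d.continuous.continuousOn
          (⟨by linarith, by linarith⟩ : (0 : ℝ) ∈ Ioo (d.eval (x k)) (d.eval (x (k + 1))))
        exact ⟨y, fun _ => ⟨hy.1, hy.2, hy0⟩⟩
      · rw [h] at h1 h2
        obtain ⟨y, hy, hy0⟩ := intermediate_value_Ioo' hle d.continuous.continuousOn
          (⟨by linarith, by linarith⟩ : (0 : ℝ) ∈ Ioo (d.eval (x (k + 1))) (d.eval (x k)))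
        exact ⟨y, fun _ => ⟨hy.1, hy.2, hy0⟩⟩
    · exact ⟨0, fun h => absurd h hk⟩
  choose y hy using hzero
  have hypos : ∀ k ≤ m, 0 < y k := fun k hk =>
    (ha0.trans_le (hx k (by omega)).1).trans (hy k hk).1
  have hylt : ∀ k < m, y k < y (k + 1) := fun k hk =>
    (hy k (by omega)).2.1.trans (hy (k + 1) (by omega)).1
  have hinj : InjOn y (Finset.range (m + 1)) := by
    refine StrictMonoOn.injOn (f := y) ?_
    have h := strictMonoOn_of_lt_add_one (f := y) (s := Icc 0 m) ordConnected_Icc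
      (fun k _ _ hk => hylt k (by simpa using hk))
    refine h.mono ?_
    intro k hk
    simp only [Finset.coe_range, mem_Iio] at hk
    exact ⟨Nat.zero_le _, by omega⟩
  set A : Finset ℝ := (Finset.range (m + 1)).image y with hA
  have hAcard : A.card = m + 1 := by
    rw [hA, Finset.card_image_of_injOn hinj, Finset.card_range]
  have hApos : ∀ u ∈ A, 0 < u ∧ d.eval u = 0 := by
    intro u hu
    simp only [hA, Finset.mem_image, Finset.mem_range] at hu
    obtain ⟨k, hk, rfl⟩ := hu
    exact ⟨hypos k (by omega), (hy k (by omega)).2.2⟩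
  set A' : Finset ℝ := A.image (fun u => -u) with hA'
  have hA'card : A'.card = m + 1 := by
    rw [hA', Finset.card_image_of_injective _ neg_injective, hAcard]
  have hA'neg : ∀ u ∈ A', u < 0 ∧ d.eval u = 0 := by
    intro u hu
    simp only [hA', Finset.mem_image] at hu
    obtain ⟨v, hv, rfl⟩ := hu
    have := hApos v hv
    exact ⟨by linarith, by rw [hdodd, this.2, neg_zero]⟩
  have hdisj : Disjoint A A' := Finset.disjoint_left.2 fun u h1 h2 =>
    absurd (hApos u h1).1 (not_lt.2 (hA'neg u h2).1.le)
  have hnot : (0 : ℝ) ∉ A ∪ A' := by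
    intro h
    rcases Finset.mem_union.1 h with h | h
    · exact lt_irrefl _ (hApos 0 h).1
    · exact lt_irrefl _ (hA'neg 0 h).1
  have hd0 : d = 0 := by
    apply Polynomial.eq_zero_of_natDegree_lt_card_of_eval_eq_zero' d (insert 0 (A ∪ A'))
    · intro u hu
      rcases Finset.mem_insert.1 hu with rfl | hu
      · have := hdodd 0
        rw [neg_zero] at this
        linarith
      · rcases Finset.mem_union.1 hu with h | h
        · exact (hApos u h).2
        · exact (hA'neg u h).2
    · rw [Finset.card_insert_of_notMem hnot, Finset.card_union_of_disjoint hdisj, hAcard, hA'card]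
      omega
  have := hsign 0 (by omega)
  rw [hd0] at this
  simp at this

open Topology in
/-- Near infinity `exp (iφ) z ^ n` is close to a nonzero real constant, so that the argument
`Re φ + n arg z` changes by less than `π/2` along a large quarter circle, while `Re φ` goes from
`π(m+1)` on the real axis to a value in `[0, π/2)` on the imaginary axis. For odd `n` this forces `n = 2m+1`. -/
lemma natDegree_eq {m : ℕ} {B : ℝ} {P : Polynomial ℝ} (hP0 : P ≠ 0) (hoddn : Odd P.natDegree)
    {φ : ℂ → ℂ} (hcont : ContinuousOn φ (closure Q))
    (hP : ∀ z ∈ closure Q, z ≠ 0 → Polynomial.aeval z P = target B (φ z))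
    (hgrow : ∀ N : ℝ, ∃ R : ℝ, ∀ z ∈ closure Q, R ≤ ‖z‖ → N ≤ (φ z).im)
    (hright : ∀ x : ℝ, 1 ≤ x → (φ x).re = Real.pi * (m + 1))
    (hcurve : ∀ y : ℝ, 0 ≤ y → 0 ≤ (φ (y * Complex.I)).re ∧
      (φ (y * Complex.I)).re < Real.pi / 2) : P.natDegree = 2 * m + 1 := by
  set n := P.natDegree with hn
  set l : Filter ℂ := comap norm atTop ⊓ 𝓟 (closure Q) with hl
  have hev : ∀ {q : ℂ → Prop}, (∀ᶠ z in l, q z) →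
      ∃ R : ℝ, ∀ z ∈ closure Q, R ≤ ‖z‖ → q z := by
    intro q hq
    rw [hl, eventually_inf_principal, eventually_comap, eventually_atTop] at hq
    obtain ⟨R, hR⟩ := hq
    exact ⟨R, fun z hz hzR => hR _ hzR z rfl hz⟩
  have him : Tendsto (fun z => (φ z).im) l atTop := by
    rw [tendsto_atTop]
    intro N
    obtain ⟨R, hR⟩ := hgrow N
    rw [hl, eventually_inf_principal, eventually_comap]
    filter_upwards [eventually_ge_atTop R] with s hs z hz hzQ
    exact hR z hzQ (by rw [hz]; exact hs)
  have hE : Tendsto (fun z => Complex.exp (Complex.I * φ z)) l (𝓝 0) := by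
    rw [tendsto_zero_iff_norm_tendsto_zero]
    have : (fun z => ‖Complex.exp (Complex.I * φ z)‖) = fun z => Real.exp (-(φ z).im) := by
      funext z; rw [Complex.norm_exp, Complex.I_mul_re]
    rw [this]
    exact Real.tendsto_exp_neg_atTop_nhds_zero.comp him
  have hinv : Tendsto (fun z : ℂ => z⁻¹) l (𝓝 0) := by
    refine tendsto_inv₀_cobounded.mono_left ?_
    rw [hl, comap_norm_atTop]
    exact inf_le_left
  -- Since `P z = z ^ n * P.reverse z⁻¹`, the reversed polynomial carries the leading behaviour.
  have hrev : Tendsto (fun z : ℂ => Polynomial.aeval z⁻¹ P.reverse) l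
      (𝓝 (P.leadingCoeff : ℂ)) := by
    have h1 : Tendsto (fun z : ℂ => Polynomial.aeval z P.reverse) (𝓝 0)
        (𝓝 (Polynomial.aeval (0 : ℂ) P.reverse)) :=
      (Polynomial.continuous_aeval P.reverse).tendsto 0
    have h2 : Polynomial.aeval (0 : ℂ) P.reverse = (P.leadingCoeff : ℂ) := by
      rw [Polynomial.aeval_def, Polynomial.eval₂_at_zero, Polynomial.coeff_zero_reverse]; rfl
    rw [h2] at h1
    exact h1.comp hinv
  have hlead : P.leadingCoeff ≠ 0 := Polynomial.leadingCoeff_ne_zero.2 hP0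
  have hC : Real.cosh B ≠ 0 := (Real.cosh_pos B).ne'
  -- The function below is `exp (iφ) z ^ n`, by the identity `P = 1 - cos φ / cosh B`.
  have hquot : Tendsto (fun z => (-(1 / (2 * (Real.cosh B : ℂ))) + Complex.exp (Complex.I * φ z) -
      Complex.exp (Complex.I * φ z) ^ 2 / (2 * (Real.cosh B : ℂ))) /
      Polynomial.aeval z⁻¹ P.reverse) l
      (𝓝 ((-(1 / (2 * Real.cosh B)) / P.leadingCoeff : ℝ) : ℂ)) := by
    have h1 := (((hE.const_add (-(1 / (2 * (Real.cosh B : ℂ))))).sub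
      ((hE.pow 2).div_const (2 * (Real.cosh B : ℂ)))).div hrev (by exact_mod_cast hlead))
    have e : ((-(1 / (2 * Real.cosh B)) / P.leadingCoeff : ℝ) : ℂ) =
        (-(1 / (2 * (Real.cosh B : ℂ))) + 0 - 0 ^ 2 / (2 * (Real.cosh B : ℂ))) /
          (P.leadingCoeff : ℂ) := by
      push_cast
      ring
    rw [e]
    exact h1
  have hre := (Complex.continuous_re.tendsto _).comp hquot
  rw [Complex.ofReal_re] at hre
  have hne : -(1 / (2 * Real.cosh B)) / P.leadingCoeff ≠ 0 := by
    have : 1 / (2 * Real.cosh B) ≠ 0 := by positivity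
    exact div_ne_zero (neg_ne_zero.2 this) hlead
  have hev1 := hre.eventually_ne hne
  have hev2 : ∀ᶠ z in l, Polynomial.aeval z⁻¹ P.reverse ≠ 0 :=
    hrev.eventually_ne (by exact_mod_cast hlead)
  obtain ⟨R', hR'⟩ := hev (hev1.and hev2)
  set R := max R' 1 with hR
  have hR1 : 1 ≤ R := le_max_right _ _
  have hR0 : 0 < R := one_pos.trans_le hR1
  have hA : ∀ z ∈ closure Q, R ≤ ‖z‖ → (Complex.exp (Complex.I * φ z) * z ^ n).re ≠ 0 := by
    intro z hz hzR
    obtain ⟨h1, h2⟩ := hR' z hz ((le_max_left _ _).trans hzR)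
    have hz0 : z ≠ 0 := norm_pos_iff.1 (hR0.trans_le hzR)
    intro h
    apply h1
    have key : Complex.exp (Complex.I * φ z) * z ^ n =
        (-(1 / (2 * (Real.cosh B : ℂ))) + Complex.exp (Complex.I * φ z) -
          Complex.exp (Complex.I * φ z) ^ 2 / (2 * (Real.cosh B : ℂ))) /
          Polynomial.aeval z⁻¹ P.reverse := by
      rw [eq_div_iff h2]
      have h3 : Polynomial.aeval z⁻¹ P.reverse * z ^ n = Polynomial.aeval z P := by
        let _ := invertibleOfNonzero hz0
        have := Polynomial.eval₂_reverse_mul_pow (algebraMap ℝ ℂ) z P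
        rw [invOf_eq_inv] at this
        exact this
      have h4 : Complex.exp (φ z * Complex.I) * Complex.exp (-(φ z * Complex.I)) = 1 := by
        rw [← Complex.exp_add, add_neg_cancel, Complex.exp_zero]
      have hC' : (Real.cosh B : ℂ) ≠ 0 := by exact_mod_cast hC
      rw [mul_assoc, mul_comm (z ^ n), h3, hP z hz hz0, target, Complex.cos,
        mul_comm Complex.I (φ z)]
      field_simp
      linear_combination (-1 : ℂ) * h4
    show (_ / _ : ℂ).re = 0
    rw [← key]
    exact h
  set c : ℝ → ℂ := fun α => R * Complex.exp (α * Complex.I) with hc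
  have hcre : ∀ α, (c α).re = R * Real.cos α := by
    intro α; rw [hc]; simp only; rw [Complex.re_ofReal_mul, Complex.exp_ofReal_mul_I_re]
  have hcim : ∀ α, (c α).im = R * Real.sin α := by
    intro α; rw [hc]; simp only; rw [Complex.im_ofReal_mul, Complex.exp_ofReal_mul_I_im]
  have hcQ : ∀ α ∈ Icc 0 (Real.pi / 2), c α ∈ closure Q := by
    intro α hα
    rw [closure_Q]
    refine ⟨?_, ?_⟩
    · rw [hcre]
      exact mul_nonneg hR0.le
        (Real.cos_nonneg_of_neg_pi_div_two_le_of_le (by linarith [hα.1, Real.pi_pos]) hα.2)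
    · rw [hcim]
      exact mul_nonneg hR0.le
        (Real.sin_nonneg_of_nonneg_of_le_pi hα.1 (by linarith [hα.2, Real.pi_pos]))
  have hcn : ∀ α, ‖c α‖ = R := by
    intro α
    simp [hc, abs_of_pos hR0, Complex.norm_exp_ofReal_mul_I]
  have hcos : ∀ α ∈ Icc 0 (Real.pi / 2), Real.cos ((φ (c α)).re + n * α) ≠ 0 := by
    intro α hα h0
    refine hA (c α) (hcQ α hα) (hcn α).ge ?_
    have : Complex.exp (Complex.I * φ (c α)) * c α ^ n =
        ((R ^ n * Real.exp (-(φ (c α)).im) : ℝ) : ℂ) *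
          Complex.exp ((((φ (c α)).re + n * α : ℝ) : ℂ) * Complex.I) := by
      have hpow : c α ^ n = (R : ℂ) ^ n * Complex.exp (n * (α * Complex.I)) := by
        rw [hc]
        simp only
        rw [mul_pow, ← Complex.exp_nat_mul]
      generalize φ (c α) = ζ at *
      have harg : Complex.I * ζ + n * (α * Complex.I) =
          ((-ζ.im : ℝ) : ℂ) + ((ζ.re + n * α : ℝ) : ℂ) * Complex.I := by
        apply Complex.ext <;> simp
      rw [hpow, mul_left_comm, ← Complex.exp_add, harg, Complex.exp_add]
      push_cast
      ring
    rw [this, Complex.re_ofReal_mul, Complex.exp_ofReal_mul_I_re, h0, mul_zero]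
  have hvc : ContinuousOn (fun α : ℝ => (φ (c α)).re + n * α) (Icc 0 (Real.pi / 2)) := by
    refine ContinuousOn.add ?_ (by fun_prop)
    exact Complex.continuous_re.comp_continuousOn (hcont.comp (by fun_prop) hcQ)
  have h0mem : (0 : ℝ) ∈ Icc 0 (Real.pi / 2) := left_mem_Icc.2 (by positivity)
  have h1mem : Real.pi / 2 ∈ Icc 0 (Real.pi / 2) := right_mem_Icc.2 (by positivity)
  have hc0 : c 0 = (R : ℝ) := by simp [hc]
  have hc1 : c (Real.pi / 2) = (R : ℝ) * Complex.I := by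
    rw [hc]; simp only; push_cast; rw [Complex.exp_pi_div_two_mul_I]
  have hv0 : (φ (c 0)).re + n * (0 : ℝ) = Real.pi * (m + 1) := by
    rw [hc0, hright R hR1]; ring
  -- The argument cannot cross an odd multiple of `π/2`, where the real part would vanish.
  have havoid : ∀ j : ℤ, ∀ α ∈ Icc 0 (Real.pi / 2),
      (φ (c α)).re + n * α ≠ Real.pi / 2 + j * Real.pi := by
    intro j α hα h
    apply hcos α hα
    rw [h, Real.cos_add_int_mul_pi, Real.cos_pi_div_two, mul_zero]
  have hup : (φ (c (Real.pi / 2))).re + n * (Real.pi / 2) < Real.pi * (m + 1) + Real.pi / 2 := by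
    rcases lt_or_gt_on_Icc hvc (havoid (m + 1)) with h | h
    · have := h _ h1mem
      push_cast at this
      linarith
    · have := h _ h0mem
      push_cast at this
      linarith [Real.pi_pos]
  have hlo : Real.pi * (m + 1) - Real.pi / 2 < (φ (c (Real.pi / 2))).re + n * (Real.pi / 2) := by
    rcases lt_or_gt_on_Icc hvc (havoid m) with h | h
    · have := h _ h0mem
      push_cast at this
      linarith [Real.pi_pos]
    · have := h _ h1mem
      push_cast at this
      linarith
  rw [hc1] at hup hlo
  obtain ⟨hq1, hq2⟩ := hcurve R hR0.le
  have hn1 : (n : ℝ) < 2 * m + 3 := by nlinarith [Real.pi_pos]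
  have hn2 : (2 * m : ℝ) < n := by nlinarith [Real.pi_pos]
  have hn1' : n < 2 * m + 3 := by exact_mod_cast hn1
  have hn2' : 2 * m < n := by exact_mod_cast hn2
  obtain ⟨k, hk⟩ := hoddn
  omega

/-! ### Growth at infinity -/

open Topology in
/-- A lower bound for `‖φ‖` near infinity in `Q` passes to the closed quadrant by continuity. -/
lemma norm_growth_closure {φ : ℂ → ℂ} (hcont : ContinuousOn φ (closure Q))
    (hlim : Tendsto (fun z => ‖φ z‖) (comap (fun z : ℂ => ‖z‖) atTop ⊓ principal Q) atTop) (N : ℝ) :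
    ∃ R : ℝ, ∀ z ∈ closure Q, R ≤ ‖z‖ → N ≤ ‖φ z‖ := by
  have h := hlim.eventually_ge_atTop N
  rw [eventually_inf_principal, eventually_comap, eventually_atTop] at h
  obtain ⟨R, hR⟩ := h
  refine ⟨R + 1, fun z hz hzR => ?_⟩
  have : (𝓝[Q] z).NeBot := mem_closure_iff_nhdsWithin_neBot.1 hz
  have h1 : Tendsto (fun w => ‖φ w‖) (𝓝[Q] z) (𝓝 ‖φ z‖) :=
    ((hcont z hz).mono subset_closure).norm
  refine ge_of_tendsto h1 ?_
  have h2 : ∀ᶠ w in 𝓝[Q] z, R < ‖w‖ :=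
    nhdsWithin_le_nhds (continuous_norm.tendsto z |>.eventually (lt_mem_nhds (by linarith)))
  filter_upwards [h2, self_mem_nhdsWithin] with w hw hwQ
  exact hR _ hw.le w rfl hwQ

lemma im_ge_of_norm {M : ℝ} {ζ : ℂ} (h0 : 0 ≤ ζ.re) (hM : ζ.re ≤ M) (hi : 0 ≤ ζ.im) :
    ‖ζ‖ - M ≤ ζ.im := by
  have := Complex.norm_le_abs_re_add_abs_im ζ
  rw [abs_of_nonneg h0, abs_of_nonneg hi] at this
  linarith

lemma norm_cos_ge {ζ : ℂ} (hi : 0 ≤ ζ.im) : ζ.im ≤ ‖Complex.cos ζ‖ := by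
  have hs : ζ.im ≤ Real.sinh ζ.im := Real.self_le_sinh_iff.2 hi
  have hn : ‖Complex.cos ζ‖ ^ 2 = (Real.cos ζ.re * Real.cosh ζ.im) ^ 2 +
      (Real.sin ζ.re * Real.sinh ζ.im) ^ 2 := by
    rw [← Complex.normSq_eq_norm_sq, Complex.normSq_apply, cos_re_eq, cos_im_eq]
    ring
  have hn2 : ‖Complex.cos ζ‖ ^ 2 = Real.cos ζ.re ^ 2 + Real.sinh ζ.im ^ 2 := by
    rw [hn, mul_pow, mul_pow, Real.cosh_sq, Real.sin_sq]
    ring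
  refine hs.trans (le_of_sq_le_sq ?_ (norm_nonneg _))
  rw [hn2]
  nlinarith [sq_nonneg (Real.cos ζ.re)]

lemma norm_target_ge {B : ℝ} {ζ : ℂ} (hi : 0 ≤ ζ.im) :
    ζ.im / Real.cosh B - 1 ≤ ‖target B ζ‖ := by
  have hC := Real.cosh_pos B
  have h1 : ‖(1 / (Real.cosh B : ℂ)) * Complex.cos ζ‖ = ‖Complex.cos ζ‖ / Real.cosh B := by
    rw [norm_mul, norm_div, norm_one, Complex.norm_real, Real.norm_of_nonneg hC.le]
    ring
  have h2 := norm_sub_norm_le ((1 / (Real.cosh B : ℂ)) * Complex.cos ζ) 1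
  rw [norm_sub_rev, norm_one, h1] at h2
  have h3 : ζ.im / Real.cosh B ≤ ‖Complex.cos ζ‖ / Real.cosh B :=
    div_le_div_of_nonneg_right (norm_cos_ge hi) hC.le
  rw [target]
  linarith

lemma bddAbove_deviation (a : ℝ) (p : Polynomial ℝ) :
    BddAbove ((fun x => |p.eval x - Real.sign x|) '' X a) := by
  have hcomp : IsCompact (X a) := isCompact_Icc.union isCompact_Icc
  obtain ⟨C, hC⟩ := hcomp.exists_bound_of_continuousOn (f := fun x => p.eval x)
    p.continuous.continuousOn
  refine ⟨C + 1, ?_⟩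
  rintro _ ⟨x, hx, rfl⟩
  have h1 := hC x hx
  have h2 : |Real.sign x| ≤ 1 := by
    rcases Real.sign_apply_eq x with h | h | h <;> rw [h] <;> norm_num
  calc |p.eval x - Real.sign x| ≤ |p.eval x| + |Real.sign x| := abs_sub _ _
    _ ≤ C + 1 := add_le_add h1 h2

/-! ### The boundary correspondence -/

lemma qsqrt_mem_closure_Q (w : ℂ) : qsqrt w ∈ closure Q := by
  rw [closure_Q]; exact ⟨qsqrt_re_nonneg w, qsqrt_im_nonneg w⟩

lemma norm_qsqrt_sq (w : ℂ) : ‖qsqrt w‖ ^ 2 = ‖w‖ := by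
  have h1 : (0 : ℝ) ≤ (‖w‖ + w.re) / 2 := by
    have := (abs_le.1 (Complex.abs_re_le_norm w)).1
    linarith
  have h2 : (0 : ℝ) ≤ (‖w‖ - w.re) / 2 := by
    have := (abs_le.1 (Complex.abs_re_le_norm w)).2
    linarith
  rw [← Complex.normSq_eq_norm_sq, Complex.normSq_apply, ← sq, ← sq, qsqrt_re, qsqrt_im,
    Real.sq_sqrt h1, Real.sq_sqrt h2]
  ring

/-- `qsqrt` sends the real axis to the boundary of `Q`. -/
lemma qsqrt_ofReal_notMem (t : ℝ) : qsqrt t ∉ Q := by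
  rintro ⟨h1, h2⟩
  rcases le_total 0 t with h | h
  · rw [qsqrt_ofReal_im h] at h2; exact lt_irrefl _ h2
  · rw [qsqrt_ofReal_re h] at h1; exact lt_irrefl _ h1

lemma qsqrt_ofReal_sq {x : ℝ} (hx : 0 ≤ x) : qsqrt ((x ^ 2 : ℝ) : ℂ) = x := by
  have := qsqrt_of_sq (z := (x : ℂ)) (by simpa using hx) (by simp)
  rw [Complex.ofReal_pow, this]

lemma qsqrt_ofReal_neg_sq {y : ℝ} (hy : 0 ≤ y) :
    qsqrt ((-y ^ 2 : ℝ) : ℂ) = y * Complex.I := by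
  have := qsqrt_of_sq (z := (y : ℂ) * Complex.I) (by simp) (by simpa using hy)
  rw [mul_pow, Complex.I_sq] at this
  rw [← this]; push_cast; ring_nf

section Boundary

variable {m : ℕ} {B a : ℝ} {φ : ℂ → ℂ}

/-- The boundary correspondence: transported to the upper half-plane by the square root, `φ` runs
monotonically along the boundary of `Ω`, so the three normalisations determine which
boundary arcs correspond. -/
lemma boundary_correspondence (hB : 0 < B) (ha0 : 0 < a)
    (hcont : ContinuousOn φ (closure Q)) (hmaps : MapsTo φ (closure Q) (closure (ΩBm B m)))
    (hholo : DifferentiableOn ℂ φ Q) (hbij : BijOn φ Q (ΩBm B m))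
    (h0 : φ 0 = (B : ℂ) * Complex.I) (ha : φ a = 0) (h1 : φ 1 = (Real.pi * (m + 1) : ℝ)) :
    ∃ θ : ℝ → ℝ, Continuous θ ∧ Monotone θ ∧ θ (a ^ 2) = 0 ∧ θ 1 = Real.pi * (m + 1) ∧
      (∀ t : ℝ, t ≤ 0 → (φ (qsqrt t)).re = gB B (φ (qsqrt t)).im ∧ B ≤ (φ (qsqrt t)).im) ∧
      (∀ t : ℝ, 0 ≤ t → t ≤ a ^ 2 → (φ (qsqrt t)).re = 0 ∨ (φ (qsqrt t)).im = 0) ∧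
      (∀ t : ℝ, a ^ 2 ≤ t → t ≤ 1 → (φ (qsqrt t)).im = 0 ∧ (φ (qsqrt t)).re = θ t) ∧
      (∀ t : ℝ, 1 ≤ t → (φ (qsqrt t)).re = Real.pi * (m + 1)) := by
  set M : ℝ := Real.pi * (m + 1) with hMdef
  have hM : Real.pi ≤ M := by
    rw [hMdef]; nlinarith [Real.pi_pos, (Nat.cast_nonneg m : (0 : ℝ) ≤ m)]
  have hΦc : Continuous fun w => φ (qsqrt w) :=
    hcont.comp_continuous continuous_qsqrt qsqrt_mem_closure_Q
  have hΦmem : ∀ w, φ (qsqrt w) ∈ ΩClosed B M := fun w =>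
    closure_ΩOpen_subset B M (hmaps (qsqrt_mem_closure_Q w))
  have hΦd : ∀ w : ℂ, 0 < w.im → DifferentiableAt ℂ (fun w => φ (qsqrt w)) w := fun w hw =>
    (hholo.differentiableAt (isOpen_Q.mem_nhds (qsqrt_mem_Q hw))).comp w (differentiableAt_qsqrt hw)
  have hΦbd : ∀ t : ℝ, φ (qsqrt t) ∉ ΩOpen B M := by
    intro t h
    refine boundary_notMem_image isOpen_Q isPreconnected_Q hcont hholo hbij.injOn
      (qsqrt_mem_closure_Q t) (qsqrt_ofReal_notMem t) ?_
    rw [hbij.image_eq]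
    exact h
  set θ : ℝ → ℝ := fun t => bdParam B (φ (qsqrt t)) with hθ
  have hmon : Monotone θ := monotone_bdParam hB hM hΦc hΦd hΦmem hΦbd
  have hθ0 : θ 0 = -B := by
    have hq : qsqrt ((0 : ℝ) : ℂ) = 0 := by simpa using qsqrt_ofReal_sq le_rfl
    have hre : (φ 0).re = 0 := by rw [h0]; simp
    have him : (φ 0).im = B := by rw [h0]; simp
    rw [hθ]; simp only
    rw [hq, bdParam_left (by rw [hre, him, gB_of_le le_rfl]), him]
  have hθa : θ (a ^ 2) = 0 := by
    rw [hθ]; simp only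
    rw [qsqrt_ofReal_sq ha0.le, ha, bdParam_bottom hB (by simp)]
    simp
  have hθ1 : θ 1 = M := by
    have hq : qsqrt ((1 : ℝ) : ℂ) = 1 := by simpa using qsqrt_ofReal_sq zero_le_one
    rw [hθ]; simp only
    rw [hq, h1, bdParam_bottom hB (by simp)]
    simp
  have hMpos : 0 < M := Real.pi_pos.trans_le hM
  have hcase := fun t : ℝ => boundary_cases hB hM (hΦmem t) (hΦbd t)
  have hnn : ∀ t : ℝ, 0 ≤ (φ (qsqrt t)).re := fun t => (gB_nonneg B _).trans (hΦmem t).2.1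
  refine ⟨θ, (continuous_bdParam B).comp (hΦc.comp Complex.continuous_ofReal), hmon, hθa, hθ1,
    fun t ht => ?_, fun t ht hta => ?_, fun t hta ht1 => ?_, fun t ht => ?_⟩
  · have hle : bdParam B (φ (qsqrt t)) ≤ -B := hθ0 ▸ hmon ht
    have him := (hΦmem t).1
    have hg := gB_nonneg B (φ (qsqrt t)).im
    rcases hcase t with ⟨h, h'⟩ | ⟨h, h'⟩ | ⟨h, h'⟩
    · exact ⟨h, by linarith⟩
    · linarith [hnn t]
    · linarith
  · have hge : -B ≤ bdParam B (φ (qsqrt t)) := hθ0 ▸ hmon ht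
    have hle : bdParam B (φ (qsqrt t)) ≤ 0 := hθa ▸ hmon hta
    have him := (hΦmem t).1
    have hg := gB_nonneg B (φ (qsqrt t)).im
    rcases hcase t with ⟨h, h'⟩ | ⟨h, h'⟩ | ⟨h, h'⟩
    · exact Or.inl (by rw [h, gB_of_le (by linarith)])
    · exact Or.inr h
    · linarith
  · have hge : 0 ≤ bdParam B (φ (qsqrt t)) := hθa ▸ hmon hta
    have hle : bdParam B (φ (qsqrt t)) ≤ M := hθ1 ▸ hmon ht1
    have him := (hΦmem t).1
    have hg := gB_nonneg B (φ (qsqrt t)).im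
    have key : (φ (qsqrt t)).im = 0 := by
      rcases hcase t with ⟨h, h'⟩ | ⟨h, h'⟩ | ⟨h, h'⟩
      · linarith
      · exact h
      · linarith
    exact ⟨key, (bdParam_bottom hB key).symm⟩
  · have hge : M ≤ bdParam B (φ (qsqrt t)) := hθ1 ▸ hmon ht
    have him := (hΦmem t).1
    rcases hcase t with ⟨h, h'⟩ | ⟨h, h'⟩ | ⟨h, h'⟩
    · linarith
    · exact le_antisymm (hΦmem t).2.2 (by linarith)
    · exact h

/-! ### The extremal polynomial -/

/-- The odd polynomial: `z * (1 - cos (φ z) / cosh B)`, as a function of `w = z²`, is real on the real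
axis, so it extends by reflection to an entire function tending to infinity. -/
lemma exists_odd_polynomial
    (hcont : ContinuousOn φ (closure Q)) (hmaps : MapsTo φ (closure Q) (closure (ΩBm B m)))
    (hholo : DifferentiableOn ℂ φ Q)
    (hgrow : ∀ N : ℝ, ∃ R : ℝ, ∀ z ∈ closure Q, R ≤ ‖z‖ → N ≤ (φ z).im)
    (hneg : ∀ t : ℝ, t ≤ 0 → (target B (φ (qsqrt t))).re = 0)
    (hpos : ∀ t : ℝ, 0 ≤ t → (target B (φ (qsqrt t))).im = 0) :
    ∃ P : Polynomial ℝ, P ≠ 0 ∧ Odd P.natDegree ∧ (∀ x : ℝ, P.eval (-x) = -P.eval x) ∧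
      ∀ z ∈ closure Q, z ≠ 0 → Polynomial.aeval z P = target B (φ z) := by
  have hC := Real.cosh_pos B
  have hΦc : Continuous fun w => φ (qsqrt w) :=
    hcont.comp_continuous continuous_qsqrt qsqrt_mem_closure_Q
  have hΦd : ∀ w : ℂ, 0 < w.im → DifferentiableAt ℂ (fun w => φ (qsqrt w)) w := fun w hw =>
    (hholo.differentiableAt (isOpen_Q.mem_nhds (qsqrt_mem_Q hw))).comp w (differentiableAt_qsqrt hw)
  have him0 : ∀ z ∈ closure Q, 0 ≤ (φ z).im := fun z hz =>
    (closure_ΩOpen_subset B _ (hmaps hz)).1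
  set f : ℂ → ℂ := fun w => qsqrt w * target B (φ (qsqrt w)) with hf
  have hfc : Continuous f :=
    continuous_qsqrt.mul ((differentiable_target B).continuous.comp hΦc)
  have hfd : ∀ w : ℂ, 0 < w.im → DifferentiableAt ℂ f w := fun w hw =>
    (differentiableAt_qsqrt hw).mul (((differentiable_target B) _).comp w (hΦd w hw))
  have hfr : ∀ t : ℝ, (f t).im = 0 := by
    intro t
    rw [hf]; simp only [Complex.mul_im]
    rcases le_total 0 t with h | h
    · rw [hpos t h, qsqrt_ofReal_im h]; ring
    · rw [hneg t h, qsqrt_ofReal_re h]; ring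
  obtain ⟨F, hFd, hFup, hFlow⟩ := exists_reflection hfc hfd hfr
  have hflarge : ∀ N : ℝ, ∃ R : ℝ, ∀ w : ℂ, R ≤ ‖w‖ → N ≤ ‖f w‖ := by
    intro N
    obtain ⟨R, hR⟩ := hgrow ((|N| + 1) * Real.cosh B)
    refine ⟨max R 1 ^ 2, fun w hw => ?_⟩
    have hq : max R 1 ≤ ‖qsqrt w‖ := by
      rw [← norm_qsqrt_sq] at hw
      exact le_of_sq_le_sq hw (norm_nonneg _)
    have h1 : 1 ≤ ‖qsqrt w‖ := (le_max_right _ _).trans hq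
    have h2 := hR _ (qsqrt_mem_closure_Q w) ((le_max_left _ _).trans hq)
    have h3 := norm_target_ge (B := B) (him0 _ (qsqrt_mem_closure_Q w))
    have h4 : |N| + 1 ≤ (φ (qsqrt w)).im / Real.cosh B := (le_div_iff₀ hC).2 h2
    rw [hf]; simp only [norm_mul]
    calc N ≤ |N| := le_abs_self N
      _ ≤ ‖target B (φ (qsqrt w))‖ := by linarith
      _ ≤ _ := le_mul_of_one_le_left (norm_nonneg _) h1
  have hFlarge : ∀ N : ℝ, ∃ R : ℝ, ∀ w : ℂ, R ≤ ‖w‖ → N ≤ ‖F w‖ := by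
    intro N
    obtain ⟨R, hR⟩ := hflarge N
    refine ⟨R, fun w hw => ?_⟩
    rcases le_or_gt 0 w.im with h | h
    · rw [hFup w h]; exact hR w hw
    · rw [hFlow w h, RCLike.norm_conj]; exact hR _ (by rwa [RCLike.norm_conj])
  obtain ⟨p, hp⟩ := exists_polynomial_of_tendsto hFd hFlarge
  obtain ⟨q, hq⟩ := exists_real_polynomial (p := p) fun x => by
    rw [hp, hFup _ (by simp)]; exact hfr x
  have hqF : ∀ w : ℂ, Polynomial.aeval w q = F w := by
    intro w; rw [← hp, ← hq, Polynomial.eval_map_algebraMap]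
  have hF0 : F 0 = 0 := by
    rw [hFup 0 (by simp)]
    have : qsqrt 0 = 0 := by simpa using qsqrt_ofReal_sq le_rfl
    simp [hf, this]
  obtain ⟨k, hk⟩ : Polynomial.X ∣ q := by
    rw [Polynomial.X_dvd_iff]
    have h := hqF 0
    rw [hF0, Polynomial.aeval_def, Polynomial.eval₂_at_zero] at h
    simpa using h
  have hk0 : k ≠ 0 := by
    rintro rfl
    obtain ⟨R, hR⟩ := hFlarge 1
    have h := hR (|R| : ℝ) (by simpa using le_abs_self R)
    rw [← hqF, hk] at h
    simp at h
    linarith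
  have hX2 : (k.comp (Polynomial.X ^ 2)).natDegree = k.natDegree * 2 := by
    rw [Polynomial.natDegree_comp, Polynomial.natDegree_X_pow]
  have hc0 : k.comp (Polynomial.X ^ 2) ≠ 0 := by
    intro h
    apply hk0
    rw [← Polynomial.expand_eq_comp_X_pow] at h
    exact (Polynomial.expand_eq_zero (by norm_num)).1 h
  refine ⟨Polynomial.X * k.comp (Polynomial.X ^ 2), mul_ne_zero Polynomial.X_ne_zero hc0, ?_, ?_,
    ?_⟩
  · rw [Polynomial.natDegree_X_mul hc0, hX2]
    exact ⟨k.natDegree, by ring⟩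
  · intro x; simp
  · intro z hz hz0
    have hz' := hz
    rw [closure_Q] at hz'
    have hi : 0 ≤ (z ^ 2).im := by
      rw [sq, Complex.mul_im]
      have := mul_nonneg hz'.1 hz'.2
      linarith
    have h := hqF (z ^ 2)
    rw [hFup _ hi, hf] at h
    simp only [qsqrt_of_sq hz'.1 hz'.2] at h
    rw [hk] at h
    simp only [map_mul, Polynomial.aeval_X] at h
    rw [map_mul, Polynomial.aeval_X, Polynomial.aeval_comp, map_pow, Polynomial.aeval_X]
    apply mul_left_cancel₀ hz0
    rw [← h]; ring

end Boundary

/-- Theorem 4 (extremal polynomial): if `φ` maps `Q` conformally onto `Ω_{B,m}` with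
`φ(∞) = ∞`, `φ(0) = iB`, `φ(a) = 0` and `φ(1) = π(m+1)`, then `1 - (1/cosh B) cos ∘ φ`
extends to an odd real polynomial of degree `2m+1` which is extremal for `L_m(a)`. -/
theorem extremal_polynomial (m : ℕ) (B a : ℝ) (hB : 0 < B) (ha0 : 0 < a) (ha1 : a < 1)
    (φ : ℂ → ℂ)
    (hcont : ContinuousOn φ (closure Q))
    (hmaps : MapsTo φ (closure Q) (closure (ΩBm B m)))
    (hholo : DifferentiableOn ℂ φ Q)
    (hbij : BijOn φ Q (ΩBm B m))
    (hlim : Tendsto (fun z => ‖φ z‖) (comap (fun z : ℂ => ‖z‖) atTop ⊓ principal Q) atTop)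
    (h0 : φ 0 = (B : ℂ) * Complex.I) (ha : φ a = 0)
    (h1 : φ 1 = (Real.pi * (m + 1) : ℝ)) :
    ∃ P : Polynomial ℝ, P.natDegree = 2 * m + 1 ∧
      (∀ x : ℝ, P.eval (-x) = -P.eval x) ∧
      (∀ z ∈ Q, Polynomial.aeval z P = 1 - (1 / (Real.cosh B : ℂ)) * Complex.cos (φ z)) ∧
      sSup ((fun x => |P.eval x - Real.sign x|) '' X a) = 1 / Real.cosh B ∧
      (1 : ℝ) / Real.cosh B = Lm m a := by
  set M : ℝ := Real.pi * (m + 1) with hMdef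
  have hC := Real.cosh_pos B
  have hΩ : ∀ z ∈ closure Q, φ z ∈ ΩClosed B M := fun z hz =>
    closure_ΩOpen_subset B M (hmaps hz)
  obtain ⟨θ, hθc, hθm, hθa, hθ1, hleft, hmid, hbot, hrt⟩ :=
    boundary_correspondence hB ha0 hcont hmaps hholo hbij h0 ha h1
  have hsinM : Real.sin M = 0 := by
    have := Real.sin_nat_mul_pi (m + 1)
    push_cast at this
    rw [hMdef, mul_comm]; exact this
  have hgrow : ∀ N : ℝ, ∃ R : ℝ, ∀ z ∈ closure Q, R ≤ ‖z‖ → N ≤ (φ z).im := by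
    intro N
    obtain ⟨R, hR⟩ := norm_growth_closure hcont hlim (N + M)
    refine ⟨R, fun z hz hzR => ?_⟩
    have hz' := hΩ z hz
    have := im_ge_of_norm ((gB_nonneg B _).trans hz'.2.1) hz'.2.2 hz'.1
    linarith [hR z hz hzR]
  -- On the left boundary curve `cos (Re ζ) cosh (Im ζ) = cosh B`.
  have hneg : ∀ t : ℝ, t ≤ 0 → (target B (φ (qsqrt t))).re = 0 := by
    intro t ht
    obtain ⟨h2, h3⟩ := hleft t ht
    rw [target_re, h2, cos_gB_mul_cosh hB h3, div_self hC.ne', sub_self]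
  have hpos : ∀ t : ℝ, 0 ≤ t → (target B (φ (qsqrt t))).im = 0 := by
    intro t ht
    rw [target_im]
    rcases le_total t (a ^ 2) with h | h
    · rcases hmid t ht h with h | h <;> simp [h]
    · rcases le_total t 1 with h' | h'
      · simp [(hbot t h h').1]
      · rw [hrt t h', hsinM]; simp
  obtain ⟨P, hP0, hPdeg, hodd, hP⟩ :=
    exists_odd_polynomial hcont hmaps hholo hgrow hneg hpos
  have hdeg : P.natDegree = 2 * m + 1 := by
    refine natDegree_eq hP0 hPdeg hcont hP hgrow (fun x hx => ?_) (fun y hy => ?_)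
    · have := hrt (x ^ 2) (one_le_pow₀ hx)
      rwa [qsqrt_ofReal_sq (zero_le_one.trans hx)] at this
    · have := (hleft (-y ^ 2) (by nlinarith)).1
      rw [qsqrt_ofReal_neg_sq hy] at this
      rw [this]
      exact ⟨gB_nonneg _ _, gB_lt _ _⟩
  have hPx : ∀ x ∈ Icc a 1, P.eval x = 1 - Real.cos (θ (x ^ 2)) / Real.cosh B := by
    intro x hx
    have hx0 : 0 < x := ha0.trans_le hx.1
    obtain ⟨h2, h3⟩ := hbot (x ^ 2) (pow_le_pow_left₀ ha0.le hx.1 2) (pow_le_one₀ hx0.le hx.2)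
    have hq := qsqrt_ofReal_sq hx0.le
    rw [hq] at h2 h3
    have hz : (x : ℂ) ∈ closure Q := by
      rw [closure_Q]; exact ⟨by simpa using hx0.le, by simp⟩
    have h4 := congrArg Complex.re (hP x hz (by exact_mod_cast hx0.ne'))
    rw [target_re, h2, h3, Real.cosh_zero, mul_one] at h4
    rw [← h4]
    have : Polynomial.aeval (x : ℂ) P = ((P.eval x : ℝ) : ℂ) :=
      Polynomial.eval₂_at_apply (algebraMap ℝ ℂ) x
    rw [this, Complex.ofReal_re]
  have hdev1 : ∀ x ∈ Icc a 1, |P.eval x - 1| ≤ 1 / Real.cosh B := by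
    intro x hx
    rw [hPx x hx, sub_sub_cancel_left, abs_neg, abs_div, abs_of_pos hC]
    exact div_le_div_of_nonneg_right (Real.abs_cos_le_one _) hC.le
  have hdev : ∀ x ∈ X a, |P.eval x - Real.sign x| ≤ 1 / Real.cosh B := by
    rintro x (hx | hx)
    · have hx' : -x ∈ Icc a 1 := ⟨by linarith [hx.2], by linarith [hx.1]⟩
      have := hdev1 _ hx'
      rw [hodd] at this
      rw [Real.sign_of_neg (by linarith [hx.2]), ← abs_neg]
      convert this using 2
      ring
    · rw [Real.sign_of_pos (ha0.trans_le hx.1)]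
      exact hdev1 x hx
  have haX : a ∈ Icc a 1 := ⟨le_rfl, ha1.le⟩
  have hsup : sSup ((fun x => |P.eval x - Real.sign x|) '' X a) = 1 / Real.cosh B := by
    refine IsGreatest.csSup_eq ⟨⟨a, Or.inr haX, ?_⟩, ?_⟩
    · simp only
      rw [Real.sign_of_pos ha0, hPx a haX, hθa, Real.cos_zero, sub_sub_cancel_left, abs_neg,
        abs_of_pos (by positivity)]
    · rintro _ ⟨x, hx, rfl⟩
      exact hdev x hx
  -- Alternation points: the preimages of the multiples of `π` in `[0, π(m+1)]`.
  have hsq1 : a ^ 2 ≤ 1 := pow_le_one₀ ha0.le ha1.le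
  have halt : ∀ k : ℕ, ∃ t : ℝ, k ≤ m + 1 → t ∈ Icc (a ^ 2) 1 ∧ θ t = k * Real.pi := by
    intro k
    by_cases hk : k ≤ m + 1
    · have hkr : (k : ℝ) ≤ m + 1 := by exact_mod_cast hk
      obtain ⟨t, ht, hte⟩ := intermediate_value_Icc hsq1 hθc.continuousOn
        (show (k * Real.pi : ℝ) ∈ Icc (θ (a ^ 2)) (θ 1) by
          rw [hθa, hθ1]
          exact ⟨by positivity, by nlinarith [Real.pi_pos]⟩)
      exact ⟨t, fun _ => ⟨ht, hte⟩⟩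
    · exact ⟨0, fun h => absurd h hk⟩
  choose t ht using halt
  have hxmem : ∀ k ≤ m + 1, √(t k) ∈ Icc a 1 := fun k hk =>
    ⟨Real.le_sqrt_of_sq_le (ht k hk).1.1, Real.sqrt_le_one.2 (ht k hk).1.2⟩
  have ht0 : ∀ k ≤ m + 1, 0 ≤ t k := fun k hk => (sq_nonneg a).trans (ht k hk).1.1
  have hlow : ∀ (p : Polynomial ℝ) (r : ℝ), p.natDegree ≤ 2 * m + 1 →
      (∀ y ∈ X a, |p.eval y - Real.sign y| ≤ r) → 1 / Real.cosh B ≤ r := by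
    intro p r hp hr
    refine alternation_lower_bound ha0 hdeg.le hp hodd (x := fun k => √(t k)) hxmem ?_ ?_ hr
    · intro k hk
      refine Real.sqrt_lt_sqrt (ht0 k (by omega)) (lt_of_not_ge fun hge => ?_)
      have := hθm hge
      rw [(ht k (by omega)).2, (ht (k + 1) (by omega)).2] at this
      push_cast at this
      nlinarith [Real.pi_pos]
    · intro k hk
      rw [hPx _ (hxmem k hk), Real.sq_sqrt (ht0 k hk), (ht k hk).2, Real.cos_nat_mul_pi]
      ring
  refine ⟨P, hdeg, hodd, fun z hz => ?_, hsup, ?_⟩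
  · have hz0 : z ≠ 0 := by
      rintro rfl
      exact lt_irrefl _ hz.1
    exact hP z (subset_closure hz) hz0
  · symm
    refine IsLeast.csInf_eq ⟨⟨P, hdeg.le, hsup.symm⟩, ?_⟩
    rintro r ⟨p, hp, rfl⟩
    exact hlow p _ hp fun y hy => le_csSup (bddAbove_deviation a p) ⟨y, hy, rfl⟩
end

section
/- For each natural number m, let a_m ∈ (0,1) satisfy a_m = L_m(a_m), and let p_m be a real polynomial of degree at most 2m+1 with sup_{x ∈ X(a_m)} |p_m(x) − sgn(x)| = L_m(a_m). Then the limit as m → ∞ of (m/log m) · 𝓛(sgn, p_m) exists and equals 1/2. -/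
/-!
The Lévy distance at the fixed point `a = L_m(a)` is exactly `a` (`levy_eq`). On `X(a)` the error
is at most `a`, so only the gap `(-a, a)` is in question, and there the values must stay in
`[-1 - a, 1 + a]`. A best approximation cannot be improved (`no_separation`), so by `sep_or_chain`
its extremal points contain an alternating chain of `2m + 3` points. A value above `1 + a` in the
gap would turn this chain into a zigzag of the polynomial with `2m + 2` steps, hence give its
derivative `2m + 1` zeros, more than the degree allows (`Zigzag.lt_natDegree`, `gap_le`).

It remains to find the size of `a`. For odd polynomials `x * Q(x²)` the problem is the
approximation of `s ↦ s^(-1/2)` on `[a², 1]` with weight `√s`, and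
`s^(-1/2) = π⁻¹ ∫ dy / (s + y²)` reduces matters to simple fractions, for which Lagrange
interpolation errors are explicit. Interpolation at the Chebyshev zeros (`interp_err`) gives
`L_m(a) ≤ 2 exp (-2 (m + 1) a)` (`Lm_le_exp`), whence `2 m a ≤ log m` (`mul_le_log`). In the other
direction, the divided difference at the extremal points of `T_{m+1}` annihilates `Q`, while the
same integral bounds its value at `s^(-1/2)` from below (`dual_bound`, `one_le_of_approx`); this
gives `2 m a ≥ log m - 5 - 3 log (log m + 5)` (`log_sub_le_mul`). Hence `m a / log m → 1/2`.
-/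

open Filter Set

/-- The Lévy-type distance on `[-1,1]`. -/
noncomputable def levy (f g : ℝ → ℝ) : ℝ :=
  sInf { h : ℝ | 0 < h ∧ ∀ x ∈ Icc (-1 : ℝ) 1, f (x - h) - h ≤ g x ∧ g x ≤ f (x + h) + h }

/-! ### Alternating chains, separation and zigzags -/

/-- Alternating descending chains: `AltChain k A B t` says that there are points
`t > y₁ > y₂ > ⋯ > y_k` with `y₁ ∈ A`, `y₂ ∈ B`, `y₃ ∈ A`, and so on. -/
def AltChain : ℕ → Set ℝ → Set ℝ → ℝ → Prop
  | 0, _, _, _ => True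
  | k + 1, A, B, t => ∃ y ∈ A, y < t ∧ AltChain k B A y

lemma AltChain.mono {k : ℕ} {A B A' B' : Set ℝ} {t : ℝ} (hA : A ⊆ A') (hB : B ⊆ B')
    (h : AltChain k A B t) : AltChain k A' B' t := by
  induction k generalizing A B A' B' t with
  | zero => trivial
  | succ k ih =>
    obtain ⟨y, hy, hyt, hc⟩ := h
    exact ⟨y, hA hy, hyt, ih hB hA hc⟩

/-- Two disjoint compact sets either carry an alternating chain of `n + 2` points, or are
strictly separated by a polynomial of degree at most `n`. Here every point of `B` lies below
some point of `A`; positivity of the polynomial above `A ∪ B` is needed for the induction,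
which cuts off the points of `A` above `max B`. -/
lemma sep_or_chain_aux (n : ℕ) : ∀ (A B : Set ℝ), IsCompact A → IsCompact B → Disjoint A B →
    (∀ b ∈ B, ∃ x ∈ A, b < x) →
    (∃ t, AltChain (n + 2) A B t) ∨
    ∃ r : Polynomial ℝ, r.natDegree ≤ n ∧ (∀ x ∈ A, 0 < r.eval x) ∧ (∀ x ∈ B, r.eval x < 0) ∧
      ∀ x, (∀ y ∈ A ∪ B, y < x) → 0 < r.eval x := by
  induction n with
  | zero =>
    intro A B hA hB hd hdom
    rcases B.eq_empty_or_nonempty with hBe | ⟨b, hb⟩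
    · exact .inr ⟨1, by simp, by simp, by simp [hBe], by simp⟩
    · obtain ⟨x, hx, hbx⟩ := hdom b hb
      exact .inl ⟨x + 1, x, hx, by linarith, b, hb, hbx, trivial⟩
  | succ n ih =>
    intro A B hA hB hd hdom
    rcases B.eq_empty_or_nonempty with hBe | hBn
    · exact .inr ⟨1, by simp, by simp, by simp [hBe], by simp⟩
    · obtain ⟨b, hb, hbmax⟩ := hB.exists_isGreatest hBn
      have hA1 : IsCompact (A ∩ Iic b) := hA.inter_right isClosed_Iic
      have hA2 : IsCompact (A ∩ Ici b) := hA.inter_right isClosed_Ici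
      have hbA : b ∉ A := fun h => Set.disjoint_left.1 hd h hb
      obtain ⟨x0, hx0, hbx0⟩ := hdom b hb
      obtain ⟨c, ⟨hcA, hcb⟩, hcmin⟩ := hA2.exists_isLeast ⟨x0, hx0, hbx0.le⟩
      have hbc : b < c := lt_of_le_of_ne hcb (fun h => hbA (h ▸ hcA))
      rcases ih B (A ∩ Iic b) hB hA1 (hd.symm.mono_right inter_subset_left)
        (fun y hy => ⟨b, hb, lt_of_le_of_ne hy.2 (fun h => hbA (h ▸ hy.1))⟩) with
        ⟨t, y, hy, hyt, hch⟩ | ⟨r, hr, hrB, hrA, hrtop⟩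
      · obtain ⟨x, hx, hyx⟩ := hdom y hy
        exact .inl ⟨x + 1, x, hx, by linarith, y, hy, hyx, hch.mono inter_subset_left subset_rfl⟩
      · obtain ⟨z, hbz, hzc⟩ := exists_between hbc
        have htop : ∀ x, z < x → 0 < r.eval x := fun x hx => hrtop x (by
          rintro y (hy | hy)
          · exact (hbmax hy).trans_lt (hbz.trans hx)
          · exact (show y ≤ b from hy.2).trans_lt (hbz.trans hx))
        refine .inr ⟨r * (Polynomial.X - Polynomial.C z), ?_, ?_, ?_, ?_⟩
        · refine Polynomial.natDegree_mul_le.trans ?_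
          rw [Polynomial.natDegree_X_sub_C]; omega
        · intro x hx
          simp only [Polynomial.eval_mul, Polynomial.eval_sub, Polynomial.eval_X,
            Polynomial.eval_C]
          rcases le_or_gt x b with h | h
          · exact mul_pos_of_neg_of_neg (hrA x ⟨hx, h⟩) (by linarith)
          · have := hcmin ⟨hx, h.le⟩
            exact mul_pos (htop x (by linarith)) (by linarith)
        · intro x hx
          have := hbmax hx
          simp only [Polynomial.eval_mul, Polynomial.eval_sub, Polynomial.eval_X,
            Polynomial.eval_C]
          exact mul_neg_of_pos_of_neg (hrB x hx) (by linarith)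
        · intro x hx
          have hcx := hx c (.inl hcA)
          simp only [Polynomial.eval_mul, Polynomial.eval_sub, Polynomial.eval_X,
            Polynomial.eval_C]
          exact mul_pos (htop x (by linarith)) (by linarith)

/-- Two disjoint compact sets either carry an alternating chain of `n + 2` points, starting in one
or the other, or are strictly separated by a polynomial of degree at most `n`. -/
lemma sep_or_chain (n : ℕ) (A B : Set ℝ) (hA : IsCompact A) (hB : IsCompact B)
    (hd : Disjoint A B) :
    (∃ t, AltChain (n + 2) A B t) ∨ (∃ t, AltChain (n + 2) B A t) ∨
    ∃ r : Polynomial ℝ, r.natDegree ≤ n ∧ (∀ x ∈ A, 0 < r.eval x) ∧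
      ∀ x ∈ B, r.eval x < 0 := by
  by_cases h : ∀ b ∈ B, ∃ x ∈ A, b < x
  · rcases sep_or_chain_aux n A B hA hB hd h with h | ⟨r, h1, h2, h3, -⟩
    · exact .inl h
    · exact .inr (.inr ⟨r, h1, h2, h3⟩)
  · push Not at h
    obtain ⟨b, hb, hmax⟩ := h
    have h' : ∀ x ∈ A, ∃ y ∈ B, x < y := fun x hx =>
      ⟨b, hb, lt_of_le_of_ne (hmax x hx) (fun h => Set.disjoint_left.1 hd hx (h ▸ hb))⟩
    rcases sep_or_chain_aux n B A hB hA hd.symm h' with h | ⟨r, h1, h2, h3, -⟩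
    · exact .inr (.inl h)
    · exact .inr (.inr ⟨-r, by simpa using h1, by simpa using h3, by simpa using h2⟩)

/-- `Zigzag p k ε x`: there are points `x > y₁ > ⋯ > y_k` such that the consecutive differences
`p x - p y₁`, `p y₁ - p y₂`, … have the strict signs `ε, -ε, ε, …`. -/
def Zigzag (p : Polynomial ℝ) : ℕ → ℝ → ℝ → Prop
  | 0, _, _ => True
  | k + 1, ε, x => ∃ y < x, 0 < ε * (p.eval x - p.eval y) ∧ Zigzag p k (-ε) y

lemma exists_deriv_sign (p : Polynomial ℝ) {ε x y : ℝ} (hyx : y < x)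
    (h : 0 < ε * (p.eval x - p.eval y)) :
    ∃ u ∈ Ioo y x, 0 < ε * p.derivative.eval u := by
  obtain ⟨u, hu, he⟩ := exists_deriv_eq_slope (fun x => p.eval x) hyx
    p.continuous.continuousOn p.differentiable.differentiableOn
  refine ⟨u, hu, ?_⟩
  rw [Polynomial.deriv] at he
  rw [he, ← mul_div_assoc]
  exact div_pos h (by linarith)

/-- A zigzag with `k + 1` steps forces `k` distinct zeros of the derivative. -/
lemma Zigzag.roots {p : Polynomial ℝ} {k : ℕ} {ε x : ℝ} (h : Zigzag p (k + 1) ε x) :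
    ∃ S : Finset ℝ, S.card = k ∧ (∀ z ∈ S, p.derivative.eval z = 0) ∧
      ∃ u < x, (∀ z ∈ S, z < u) ∧ 0 < ε * p.derivative.eval u := by
  induction k generalizing ε x with
  | zero =>
    obtain ⟨y, hyx, hpos, -⟩ := h
    obtain ⟨u, hu, hu'⟩ := exists_deriv_sign p hyx hpos
    exact ⟨∅, rfl, by simp, u, hu.2, by simp, hu'⟩
  | succ k ih =>
    obtain ⟨y, hyx, hpos, hz⟩ := h
    obtain ⟨S, hS, hS0, v, hvy, hSv, hv⟩ := ih hz
    obtain ⟨u, hu, hu'⟩ := exists_deriv_sign p hyx hpos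
    have hvu : v < u := hvy.trans hu.1
    have hc : ContinuousOn (fun x => ε * p.derivative.eval x) (Icc v u) :=
      (continuous_const.mul p.derivative.continuous).continuousOn
    obtain ⟨w, hw, hw0⟩ := intermediate_value_Ioo hvu.le hc
      (show (0 : ℝ) ∈ Ioo (ε * p.derivative.eval v) (ε * p.derivative.eval u) from
        ⟨by linarith, hu'⟩)
    have hε : ε ≠ 0 := by rintro rfl; simp at hu'
    have hw0' : p.derivative.eval w = 0 := by simpa [hε] using hw0
    have hwS : w ∉ S := fun hm => (hSv w hm).not_gt hw.1
    refine ⟨insert w S, by rw [Finset.card_insert_of_notMem hwS, hS], ?_, u, hu.2, ?_, hu'⟩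
    · intro z hzm
      rcases Finset.mem_insert.1 hzm with rfl | hm
      · exact hw0'
      · exact hS0 z hm
    · intro z hzm
      rcases Finset.mem_insert.1 hzm with rfl | hm
      · exact hw.2
      · exact (hSv z hm).trans hvu

lemma Zigzag.lt_natDegree {p : Polynomial ℝ} {k : ℕ} {ε x : ℝ} (h : Zigzag p (k + 1) ε x) :
    k < p.natDegree := by
  obtain ⟨S, hS, hS0, u, -, -, hu⟩ := h.roots
  have hne : p.derivative ≠ 0 := by rintro h0; simp [h0] at hu
  have h1 : S.card ≤ p.derivative.natDegree := by
    refine le_trans (Finset.card_le_card (t := p.derivative.roots.toFinset) ?_)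
      ((Multiset.toFinset_card_le _).trans (Polynomial.card_roots' _))
    intro z hz
    simp [hne, hS0 z hz]
  have h0 : p.natDegree ≠ 0 := by
    intro h0
    rw [Polynomial.natDegree_eq_zero] at h0
    obtain ⟨c, rfl⟩ := h0
    simp at hne
  have := Polynomial.natDegree_derivative_lt h0
  omega

/-! ### The Lévy distance at the fixed point -/

lemma X_ne_zero {a x : ℝ} (ha : 0 < a) (hx : x ∈ X a) : x ≠ 0 := by
  rintro rfl
  rcases hx with h | h
  · linarith [h.2]
  · linarith [h.1]

lemma X_le_of_pos {a x : ℝ} (hx : x ∈ X a) (h0 : 0 < x) : a ≤ x := by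
  rcases hx with h | h
  · linarith [h.2]
  · exact h.1

lemma X_le_of_neg {a x : ℝ} (hx : x ∈ X a) (h0 : x < 0) : x ≤ -a := by
  rcases hx with h | h
  · exact h.2
  · linarith [h.1]

lemma isCompact_X (a : ℝ) : IsCompact (X a) := isCompact_Icc.union isCompact_Icc

lemma continuousOn_sign_X {a : ℝ} (ha : 0 < a) : ContinuousOn Real.sign (X a) := by
  have h : ContinuousOn (fun x : ℝ => x / |x|) (X a) :=
    continuousOn_id.div continuous_abs.continuousOn
      (fun x hx => abs_ne_zero.2 (X_ne_zero ha hx))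
  refine h.congr fun x hx => ?_
  rcases lt_or_gt_of_ne (X_ne_zero ha hx) with h0 | h0
  · simp only [Real.sign_of_neg h0, abs_of_neg h0, div_neg, div_self h0.ne]
  · simp only [Real.sign_of_pos h0, abs_of_pos h0, div_self h0.ne']

lemma continuousOn_err {a : ℝ} (ha : 0 < a) (p : Polynomial ℝ) :
    ContinuousOn (fun x => p.eval x - Real.sign x) (X a) :=
  p.continuous.continuousOn.sub (continuousOn_sign_X ha)

lemma X_nonempty {a : ℝ} (ha1 : a < 1) : (X a).Nonempty := ⟨1, .inr ⟨ha1.le, le_rfl⟩⟩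

/-- The error function is bounded on `X a`, so that the suprema in the definition of `Lm` are
genuine. -/
lemma bddAbove_err {a : ℝ} (ha : 0 < a) (p : Polynomial ℝ) :
    BddAbove ((fun x => |p.eval x - Real.sign x|) '' X a) :=
  ((isCompact_X a).image_of_continuousOn (continuousOn_err ha p).abs).bddAbove

/-- The infimum in the definition of `Lm` is genuine. -/
lemma bddBelow_Lm (m : ℕ) (a : ℝ) :
    BddBelow { r | ∃ p : Polynomial ℝ, p.natDegree ≤ 2 * m + 1 ∧
      r = sSup ((fun x => |p.eval x - Real.sign x|) '' X a) } := by
  refine ⟨0, ?_⟩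
  rintro r ⟨p, -, rfl⟩
  apply Real.sSup_nonneg
  rintro _ ⟨x, -, rfl⟩
  exact abs_nonneg _

lemma Lm_le_of_bound {m : ℕ} {a M : ℝ} (ha1 : a < 1) (p : Polynomial ℝ)
    (hp : p.natDegree ≤ 2 * m + 1) (h : ∀ x ∈ X a, |p.eval x - Real.sign x| ≤ M) :
    Lm m a ≤ M := by
  refine (csInf_le (bddBelow_Lm m a) ⟨p, hp, rfl⟩).trans
    (csSup_le ((X_nonempty ha1).image _) ?_)
  rintro _ ⟨x, hx, rfl⟩
  exact h x hx

lemma exists_Lm_le_err {m : ℕ} {a : ℝ} (ha : 0 < a) (ha1 : a < 1) (p : Polynomial ℝ)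
    (hp : p.natDegree ≤ 2 * m + 1) : ∃ x ∈ X a, Lm m a ≤ |p.eval x - Real.sign x| := by
  obtain ⟨x, hx, hmax⟩ := (isCompact_X a).exists_isMaxOn (X_nonempty ha1)
    (continuousOn_err ha p).abs
  exact ⟨x, hx, Lm_le_of_bound ha1 p hp fun y hy => hmax hy⟩

/-- The points of `X a` where the error equals `ε * δ`; with `ε = ± 1` and `δ` the norm of the
error these are the extremal points of either sign. -/
def errLevel (p : Polynomial ℝ) (a δ ε : ℝ) : Set ℝ :=
  {x ∈ X a | p.eval x - Real.sign x = ε * δ}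

lemma isCompact_errLevel {a : ℝ} (ha : 0 < a) (p : Polynomial ℝ) (δ ε : ℝ) :
    IsCompact (errLevel p a δ ε) :=
  (isCompact_X a).of_isClosed_subset
    ((continuousOn_err ha p).preimage_isClosed_of_isClosed (isCompact_X a).isClosed
      isClosed_singleton) (fun _ hx => hx.1)

/-- Kolmogorov's criterion: a best approximation admits no polynomial of the same degree that
has the sign of the error at all the extremal points. -/
lemma no_separation {m : ℕ} {a δ : ℝ} (ha : 0 < a) (ha1 : a < 1) (hδ : 0 < δ)
    (p : Polynomial ℝ) (hp : p.natDegree ≤ 2 * m + 1)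
    (hbd : ∀ x ∈ X a, |p.eval x - Real.sign x| ≤ δ)
    (hmin : ∀ q : Polynomial ℝ, q.natDegree ≤ 2 * m + 1 →
      ∃ x ∈ X a, δ ≤ |q.eval x - Real.sign x|)
    (r : Polynomial ℝ) (hr : r.natDegree ≤ 2 * m + 1)
    (hpos : ∀ x ∈ errLevel p a δ 1, 0 < r.eval x)
    (hneg : ∀ x ∈ errLevel p a δ (-1), r.eval x < 0) : False := by
  set e : ℝ → ℝ := fun x => p.eval x - Real.sign x with he
  have hec : ContinuousOn e (X a) := continuousOn_err ha p
  have hrc : ContinuousOn (fun x => r.eval x) (X a) := r.continuous.continuousOn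
  -- At every point of `X a` either `|e| < δ` or `e * r > 0`, so the continuous function
  -- `max (δ² - e²) (e r)` has a positive minimum `κ` there.
  obtain ⟨x₁, hx₁, hx₁min⟩ := (isCompact_X a).exists_isMinOn (X_nonempty ha1)
    ((continuousOn_const (c := δ ^ 2)).sub (hec.pow 2) |>.sup (hec.mul hrc))
  obtain ⟨x₂, hx₂, hx₂max⟩ := (isCompact_X a).exists_isMaxOn (X_nonempty ha1) hrc.abs
  set κ := max (δ ^ 2 - e x₁ ^ 2) (e x₁ * r.eval x₁) with hκ
  set M := |r.eval x₂| with hM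
  have hM0 : 0 ≤ M := abs_nonneg _
  have hκ0 : 0 < κ := by
    have hb := hbd x₁ hx₁
    rcases hb.lt_or_eq with hlt | heq
    · refine lt_max_of_lt_left ?_
      have : e x₁ ^ 2 < δ ^ 2 := sq_lt_sq.2 (by rwa [abs_of_pos hδ])
      linarith
    · refine lt_max_of_lt_right ?_
      rcases (abs_eq hδ.le).1 heq with h | h
      · have h' : e x₁ = δ := h
        rw [h']
        exact mul_pos hδ (hpos x₁ ⟨hx₁, by simpa using h⟩)
      · have h' : e x₁ = -δ := h
        rw [h']
        exact mul_pos_of_neg_of_neg (by linarith) (hneg x₁ ⟨hx₁, by simpa using h⟩)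
  -- Subtracting `η r` lowers `|e|` below `δ` everywhere: where `e r ≥ κ` the linear term of
  -- `(e - η r)²` beats the quadratic one, and where `δ² - e² ≥ κ` the perturbation is too small.
  set η := min 1 (κ / (2 * (2 * δ * M + M ^ 2 + 1))) with hη
  have hden : 0 < 2 * δ * M + M ^ 2 + 1 := by positivity
  have hη0 : 0 < η := lt_min one_pos (by positivity)
  have hη1 : η ≤ 1 := min_le_left _ _
  have hηκ : η * (2 * δ * M + M ^ 2 + 1) < κ := by
    have : η ≤ κ / (2 * (2 * δ * M + M ^ 2 + 1)) := min_le_right _ _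
    rw [le_div_iff₀ (by positivity)] at this
    nlinarith
  obtain ⟨x, hx, hxδ⟩ := hmin (p - Polynomial.C η * r)
    ((Polynomial.natDegree_sub_le_of_le hp
      ((Polynomial.natDegree_C_mul_le _ _).trans hr)).trans (max_self _).le)
  have hev : (p - Polynomial.C η * r).eval x - Real.sign x = e x - η * r.eval x := by
    simp [he]; ring
  rw [hev] at hxδ
  have hsq : δ ^ 2 ≤ (e x - η * r.eval x) ^ 2 := by
    rw [← sq_abs (e x - _)]
    exact pow_le_pow_left₀ hδ.le hxδ 2
  have hrM : |r.eval x| ≤ M := hx₂max hx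
  have heδ : |e x| ≤ δ := hbd x hx
  have hr2 : r.eval x ^ 2 ≤ M ^ 2 := sq_le_sq.2 (by rwa [abs_of_nonneg hM0])
  have he2 : e x ^ 2 ≤ δ ^ 2 := sq_le_sq.2 (by rwa [abs_of_pos hδ])
  have her : |e x * r.eval x| ≤ δ * M := by
    rw [abs_mul]; exact mul_le_mul heδ hrM (abs_nonneg _) hδ.le
  have her' := abs_le.1 her
  have hηη : η ^ 2 * r.eval x ^ 2 ≤ η * M ^ 2 := by
    have : η ^ 2 ≤ η := by nlinarith
    exact mul_le_mul this hr2 (sq_nonneg _) hη0.le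
  have hκx : κ ≤ max (δ ^ 2 - e x ^ 2) (e x * r.eval x) := hx₁min hx
  have hexp : (e x - η * r.eval x) ^ 2
      = e x ^ 2 - 2 * (η * (e x * r.eval x)) + η ^ 2 * r.eval x ^ 2 := by ring
  rcases le_max_iff.1 hκx with h | h
  · have : η * -(δ * M) ≤ η * (e x * r.eval x) := mul_le_mul_of_nonneg_left her'.1 hη0.le
    nlinarith
  · have : η * κ ≤ η * (e x * r.eval x) := mul_le_mul_of_nonneg_left h hη0.le
    have h3 : η * (η * (2 * δ * M + M ^ 2 + 1)) < η * κ := mul_lt_mul_of_pos_left hηκ hη0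
    have h4 : η ^ 2 * r.eval x ^ 2 ≤ η ^ 2 * M ^ 2 := mul_le_mul_of_nonneg_left hr2 (sq_nonneg _)
    have h5 : 0 ≤ η ^ 2 * (2 * δ * M) := by positivity
    have h6 : 0 < η ^ 2 := by positivity
    nlinarith

/-- To the left of the gap, alternation of the error is a zigzag of `p`. -/
lemma zigzag_left {p : Polynomial ℝ} {a δ : ℝ} (hδ : 0 < δ) {k : ℕ} {ε y : ℝ}
    (hε : ε = 1 ∨ ε = -1) (hy0 : y < 0) (hy : y ∈ errLevel p a δ ε)
    (hc : AltChain k (errLevel p a δ (-ε)) (errLevel p a δ ε) y) : Zigzag p k ε y := by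
  induction k generalizing ε y with
  | zero => trivial
  | succ k ih =>
    obtain ⟨z, hz, hzy, hch⟩ := hc
    have h1 := hy.2
    have h2 := hz.2
    rw [Real.sign_of_neg hy0] at h1
    rw [Real.sign_of_neg (hzy.trans hy0)] at h2
    refine ⟨z, hzy, ?_, ih (by rcases hε with rfl | rfl <;> simp) (hzy.trans hy0) hz
      (by simpa using hch)⟩
    rcases hε with rfl | rfl <;> linarith

/-- A value above `1 + δ` inside the gap repairs the zigzag where it would break: there the
error passes from `δ` at the last point on the left to `-δ` at the first point on the right. -/
lemma zigzag_right {p : Polynomial ℝ} {a δ : ℝ} (ha : 0 < a) (hδ : 0 < δ) {k : ℕ}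
    {ε y x₀ : ℝ} (hx₀ : x₀ ∈ Ioo (-a) a) (hpx₀ : 1 + δ < p.eval x₀)
    (hε : ε = 1 ∨ ε = -1) (hy0 : 0 < y) (hy : y ∈ errLevel p a δ ε)
    (hc : AltChain k (errLevel p a δ (-ε)) (errLevel p a δ ε) y) : Zigzag p k ε y := by
  induction k generalizing ε y with
  | zero => trivial
  | succ k ih =>
    obtain ⟨z, hz, hzy, hch⟩ := hc
    have h1 := hy.2
    have h2 := hz.2
    rw [Real.sign_of_pos hy0] at h1
    rcases lt_or_gt_of_ne (X_ne_zero ha hz.1) with hz0 | hz0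
    · rw [Real.sign_of_neg hz0] at h2
      rcases hε with rfl | rfl
      · exact ⟨z, hzy, by linarith, zigzag_left hδ (.inr rfl) hz0 hz (by simpa using hch)⟩
      · have hxy : x₀ < y := hx₀.2.trans_le (X_le_of_pos hy.1 hy0)
        refine ⟨x₀, hxy, by linarith, ?_⟩
        cases k with
        | zero => trivial
        | succ j =>
          obtain ⟨w, hw, hwz, hch⟩ := hch
          have hw0 := hwz.trans hz0
          have h3 := hw.2
          rw [Real.sign_of_neg hw0] at h3
          refine ⟨w, (X_le_of_neg hw.1 hw0).trans_lt hx₀.1, by linarith, ?_⟩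
          simpa using zigzag_left hδ (.inr rfl) hw0 hw (by simpa using hch)
    · rw [Real.sign_of_pos hz0] at h2
      refine ⟨z, hzy, ?_, ih (by rcases hε with rfl | rfl <;> simp) hz0 hz
        (by simpa using hch)⟩
      rcases hε with rfl | rfl <;> linarith

/-- A best approximation does not exceed `1 + δ` in the gap, for otherwise the alternation
points would give `p` more critical points than its degree allows. -/
lemma gap_le {m : ℕ} {a δ : ℝ} (ha : 0 < a) (ha1 : a < 1) (hδ : 0 < δ)
    (p : Polynomial ℝ) (hp : p.natDegree ≤ 2 * m + 1)
    (hbd : ∀ x ∈ X a, |p.eval x - Real.sign x| ≤ δ)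
    (hmin : ∀ q : Polynomial ℝ, q.natDegree ≤ 2 * m + 1 →
      ∃ x ∈ X a, δ ≤ |q.eval x - Real.sign x|)
    {x₀ : ℝ} (hx₀ : x₀ ∈ Ioo (-a) a) : p.eval x₀ ≤ 1 + δ := by
  by_contra! hcon
  have key : ∀ ε : ℝ, (ε = 1 ∨ ε = -1) → ∀ t,
      ¬ AltChain (2 * m + 1 + 2) (errLevel p a δ ε) (errLevel p a δ (-ε)) t := by
    rintro ε hε t ⟨y, hy, -, hc⟩
    have hz : Zigzag p (2 * m + 1 + 1) ε y := by
      rcases lt_or_gt_of_ne (X_ne_zero ha hy.1) with h0 | h0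
      · exact zigzag_left hδ hε h0 hy hc
      · exact zigzag_right ha hδ hx₀ hcon hε h0 hy hc
    have := hz.lt_natDegree
    omega
  have hd : Disjoint (errLevel p a δ 1) (errLevel p a δ (-1)) := by
    rw [Set.disjoint_left]
    intro x h1 h2
    have := h1.2.symm.trans h2.2
    linarith
  rcases sep_or_chain (2 * m + 1) _ _ (isCompact_errLevel ha p δ 1)
    (isCompact_errLevel ha p δ (-1)) hd with ⟨t, h⟩ | ⟨t, h⟩ | ⟨r, hr, h1, h2⟩
  · exact key 1 (.inl rfl) t h
  · exact key (-1) (.inr rfl) t (by simpa using h)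
  · exact no_separation ha ha1 hδ p hp hbd hmin r hr h1 h2

lemma neg_mem_X {a x : ℝ} (hx : x ∈ X a) : -x ∈ X a := by
  rcases hx with h | h
  · exact .inr ⟨by linarith [h.2], by linarith [h.1]⟩
  · exact .inl ⟨by linarith [h.2], by linarith [h.1]⟩

/-- The bound in the gap is two-sided because `x ↦ -p (-x)` is a best approximation as well. -/
lemma abs_gap_le {m : ℕ} {a δ : ℝ} (ha : 0 < a) (ha1 : a < 1) (hδ : 0 < δ)
    (p : Polynomial ℝ) (hp : p.natDegree ≤ 2 * m + 1)
    (hbd : ∀ x ∈ X a, |p.eval x - Real.sign x| ≤ δ)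
    (hmin : ∀ q : Polynomial ℝ, q.natDegree ≤ 2 * m + 1 →
      ∃ x ∈ X a, δ ≤ |q.eval x - Real.sign x|)
    {x₀ : ℝ} (hx₀ : x₀ ∈ Ioo (-a) a) : |p.eval x₀| ≤ 1 + δ := by
  refine abs_le.2 ⟨?_, gap_le ha ha1 hδ p hp hbd hmin hx₀⟩
  have hq : (-(p.comp (-Polynomial.X))).natDegree ≤ 2 * m + 1 := by
    rw [Polynomial.natDegree_neg, Polynomial.natDegree_comp]
    simpa using hp
  have := gap_le (x₀ := -x₀) ha ha1 hδ (-(p.comp (-Polynomial.X))) hq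
    (fun x hx => by
      have := hbd (-x) (neg_mem_X hx)
      rw [Real.sign_neg] at this
      rw [← abs_neg]
      convert this using 2
      simp [add_comm]) hmin ⟨by linarith [hx₀.2], by linarith [hx₀.1]⟩
  simp at this
  linarith

/-- At the fixed point `a = L_m(a)` the Lévy distance from `sgn` to the extremal polynomial is
exactly `a`. -/
lemma levy_eq {m : ℕ} {a : ℝ} (ha : a ∈ Ioo (0 : ℝ) 1) (hfix : a = Lm m a)
    (p : Polynomial ℝ) (hdeg : p.natDegree ≤ 2 * m + 1)
    (hext : sSup ((fun x => |p.eval x - Real.sign x|) '' X a) = Lm m a) :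
    levy Real.sign (fun x => p.eval x) = a := by
  obtain ⟨ha0, ha1⟩ := ha
  have hbd : ∀ x ∈ X a, |p.eval x - Real.sign x| ≤ a := fun x hx => by
    exact (le_csSup (bddAbove_err ha0 p) ⟨x, hx, rfl⟩).trans (hext.trans hfix.symm).le
  have hmin : ∀ q : Polynomial ℝ, q.natDegree ≤ 2 * m + 1 →
      ∃ x ∈ X a, a ≤ |q.eval x - Real.sign x| := fun q hq => by
    have := exists_Lm_le_err ha0 ha1 q hq
    rwa [← hfix] at this
  have hsign : ∀ x, -1 ≤ Real.sign x ∧ Real.sign x ≤ 1 := fun x => by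
    rcases Real.sign_apply_eq x with h | h | h <;> rw [h] <;> norm_num
  have hmem : ∀ h, a < h → h ∈ { h : ℝ | 0 < h ∧ ∀ x ∈ Icc (-1 : ℝ) 1,
      Real.sign (x - h) - h ≤ p.eval x ∧ p.eval x ≤ Real.sign (x + h) + h } := by
    intro h hh
    refine ⟨ha0.trans hh, fun x hx => ?_⟩
    rcases le_or_gt a x with h1 | h1
    · have := abs_le.1 (hbd x (.inr ⟨h1, hx.2⟩))
      rw [Real.sign_of_pos (ha0.trans_le h1)] at this
      rw [Real.sign_of_pos (show 0 < x + h by linarith)]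
      exact ⟨by linarith [(hsign (x - h)).2], by linarith⟩
    rcases le_or_gt x (-a) with h2 | h2
    · have := abs_le.1 (hbd x (.inl ⟨hx.1, h2⟩))
      rw [Real.sign_of_neg (show x < 0 by linarith)] at this
      rw [Real.sign_of_neg (show x - h < 0 by linarith)]
      exact ⟨by linarith, by linarith [(hsign (x + h)).1]⟩
    · have := abs_le.1 (abs_gap_le ha0 ha1 ha0 p hdeg hbd hmin ⟨h2, h1⟩)
      rw [Real.sign_of_neg (show x - h < 0 by linarith),
        Real.sign_of_pos (show 0 < x + h by linarith)]
      exact ⟨by linarith, by linarith⟩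
  apply le_antisymm
  · refine le_of_forall_gt_imp_ge_of_dense fun h hh => ?_
    exact csInf_le ⟨0, fun y hy => hy.1.le⟩ (hmem h hh)
  · refine le_csInf ⟨a + 1, hmem _ (by linarith)⟩ ?_
    rintro h ⟨hh0, hh⟩
    by_contra! hlt
    -- For `h < a` the two inequalities force the error below `a` on all of `X a`.
    obtain ⟨x, hx, hxa⟩ := hmin p hdeg
    refine absurd hxa (not_le.2 (lt_of_le_of_lt ?_ hlt))
    rcases lt_or_gt_of_ne (X_ne_zero ha0 hx) with h0 | h0
    · have h1 := X_le_of_neg hx h0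
      rcases hx with hx | hx
      · have := hh x ⟨hx.1, by linarith⟩
        rw [Real.sign_of_neg (show x + h < 0 by linarith),
          Real.sign_of_neg (show x - h < 0 by linarith)] at this
        rw [Real.sign_of_neg h0]
        exact abs_le.2 ⟨by linarith, by linarith⟩
      · linarith [hx.1]
    · have h1 := X_le_of_pos hx h0
      rcases hx with hx | hx
      · linarith [hx.2]
      · have := hh x ⟨by linarith, hx.2⟩
        rw [Real.sign_of_pos (show 0 < x + h by linarith),
          Real.sign_of_pos (show 0 < x - h by linarith)] at this
        rw [Real.sign_of_pos h0]
        exact abs_le.2 ⟨by linarith, by linarith⟩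

/-! ### Interpolation and duality for the inverse square root -/

open MeasureTheory in
/-- The representation `1 / √c = π⁻¹ ∫ dy / (c + y²)`. -/
lemma integrable_inv_add_sq {c : ℝ} (hc : 0 < c) :
    Integrable (fun y : ℝ => (c + y ^ 2)⁻¹) ∧ ∫ y : ℝ, (c + y ^ 2)⁻¹ = Real.pi * (√c)⁻¹ := by
  have hs : 0 < √c := Real.sqrt_pos.2 hc
  have hfun : (fun y : ℝ => (c + y ^ 2)⁻¹) = fun y => c⁻¹ * (1 + (y / √c) ^ 2)⁻¹ := by
    funext y
    rw [← mul_inv, div_pow, Real.sq_sqrt hc.le]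
    congr 1
    field_simp
  rw [hfun]
  constructor
  · exact (integrable_inv_one_add_sq.comp_div hs.ne').const_mul _
  · rw [integral_const_mul, Measure.integral_comp_div (fun y => (1 + y ^ 2)⁻¹),
      integral_univ_inv_one_add_sq, abs_of_pos hs, smul_eq_mul]
    rw [show c⁻¹ = (√c)⁻¹ * (√c)⁻¹ by rw [← mul_inv, Real.mul_self_sqrt hc.le]]
    field_simp

/-- Partial fractions of the reciprocal of the nodal polynomial. -/
lemma sum_nodalWeight_mul_inv {s : Finset ℕ} {v : ℕ → ℝ} (hs : s.Nonempty)
    (hv : Set.InjOn v s) {z : ℝ} (hz : ∀ i ∈ s, z ≠ v i) :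
    ∑ i ∈ s, Lagrange.nodalWeight s v i * (z - v i)⁻¹ = ((Lagrange.nodal s v).eval z)⁻¹ := by
  have h := Lagrange.eval_interpolate_not_at_node (s := s) (v := v) 1 hz
  rw [Lagrange.interpolate_one hv hs] at h
  simp only [Polynomial.eval_one, Pi.one_apply, mul_one] at h
  exact eq_inv_of_mul_eq_one_right h.symm

/-- Relative error of Lagrange interpolation of `t ↦ 1 / (t - z)`, with `z` below the nodes: it
equals the nodal polynomial at `t` divided by the nodal polynomial at `z`. -/
lemma interp_err_pointwise {s : Finset ℕ} {v : ℕ → ℝ} (hs : s.Nonempty) (hv : Set.InjOn v s)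
    {t z M : ℝ} (hz : ∀ i ∈ s, z < v i) (ht : z < t)
    (hM : |(Lagrange.nodal s v).eval t| ≤ M * |(Lagrange.nodal s v).eval z|) :
    |(t - z)⁻¹ - (Lagrange.interpolate s v fun i => (v i - z)⁻¹).eval t| ≤ M * (t - z)⁻¹ := by
  have hNz : 0 < |(Lagrange.nodal s v).eval z| :=
    abs_pos.2 (Lagrange.eval_nodal_not_at_node fun i hi => (hz i hi).ne)
  have hM0 : 0 ≤ M := by
    by_contra! h
    have := mul_neg_of_neg_of_pos h hNz
    linarith [abs_nonneg ((Lagrange.nodal s v).eval t)]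
  have htz : 0 < (t - z)⁻¹ := inv_pos.2 (by linarith)
  by_cases h : ∃ j ∈ s, t = v j
  · obtain ⟨j, hj, rfl⟩ := h
    rw [Lagrange.eval_interpolate_at_node _ hv hj, sub_self, abs_zero]
    positivity
  · push Not at h
    have hNt : (Lagrange.nodal s v).eval t ≠ 0 := Lagrange.eval_nodal_not_at_node h
    have hNz' := abs_pos.1 hNz
    have key : ∑ i ∈ s, Lagrange.nodalWeight s v i * (t - v i)⁻¹ * (v i - z)⁻¹
        = (t - z)⁻¹ * (((Lagrange.nodal s v).eval t)⁻¹ - ((Lagrange.nodal s v).eval z)⁻¹) := by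
      rw [← sum_nodalWeight_mul_inv hs hv h,
        ← sum_nodalWeight_mul_inv hs hv (fun i hi => (hz i hi).ne), ← Finset.sum_sub_distrib,
        Finset.mul_sum]
      refine Finset.sum_congr rfl fun i hi => ?_
      have h1 : t - v i ≠ 0 := sub_ne_zero.2 (h i hi)
      have h2 : v i - z ≠ 0 := by linarith [hz i hi]
      have h3 : z - v i ≠ 0 := by linarith [hz i hi]
      have h4 : t - z ≠ 0 := by linarith
      field_simp
      ring
    rw [Lagrange.eval_interpolate_not_at_node _ h, key]
    have : (t - z)⁻¹ - (Lagrange.nodal s v).eval t * ((t - z)⁻¹ *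
        (((Lagrange.nodal s v).eval t)⁻¹ - ((Lagrange.nodal s v).eval z)⁻¹))
        = ((Lagrange.nodal s v).eval t / (Lagrange.nodal s v).eval z) * (t - z)⁻¹ := by
      field_simp
      ring
    rw [this, abs_mul, abs_div, abs_of_pos htz]
    exact mul_le_mul_of_nonneg_right ((div_le_iff₀ hNz).2 hM) htz.le

open MeasureTheory in
/-- Relative error of Lagrange interpolation of `t ↦ (α t + β)^(-1/2)`, obtained by averaging
the interpolation of the simple fractions `1 / (α t + β + y²)` over `y ∈ ℝ`. -/
lemma interp_err {s : Finset ℕ} {v : ℕ → ℝ} (hs : s.Nonempty) (hv : Set.InjOn v s)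
    {α β t M : ℝ} (hα : 0 < α) (hpos : ∀ i ∈ s, 0 < α * v i + β) (ht : 0 < α * t + β)
    (hM : ∀ y : ℝ, |(Lagrange.nodal s v).eval t|
      ≤ M * |(Lagrange.nodal s v).eval (-((β + y ^ 2) / α))|) :
    |√(α * t + β) *
      (Lagrange.interpolate s v fun i => (√(α * v i + β))⁻¹).eval t - 1| ≤ M := by
  have heq : ∀ x y : ℝ, (α * x + β + y ^ 2)⁻¹ = α⁻¹ * (x - -((β + y ^ 2) / α))⁻¹ := by
    intro x y
    rw [← mul_inv]
    congr 1
    field_simp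
    ring
  have hlt : ∀ x y : ℝ, 0 < α * x + β → -((β + y ^ 2) / α) < x := by
    intro x y hx
    rw [neg_lt, lt_div_iff₀ hα]
    nlinarith [sq_nonneg y]
  have hI : ∀ (r : ℕ → ℝ), (Lagrange.interpolate s v r).eval t
      = ∑ i ∈ s, r i * (Lagrange.basis s v i).eval t := fun r => by
    simp [Lagrange.interpolate_apply, Polynomial.eval_finsetSum]
  have hpt : ∀ y : ℝ, ‖(α * t + β + y ^ 2)⁻¹ -
      ∑ i ∈ s, (α * v i + β + y ^ 2)⁻¹ * (Lagrange.basis s v i).eval t‖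
      ≤ M * (α * t + β + y ^ 2)⁻¹ := by
    intro y
    have h := interp_err_pointwise hs hv (fun i hi => hlt _ y (hpos i hi)) (hlt t y ht) (hM y)
    rw [hI] at h
    simp only [heq, mul_assoc]
    rw [← Finset.mul_sum, ← mul_sub, Real.norm_eq_abs, abs_mul, abs_of_pos (inv_pos.2 hα),
      mul_left_comm]
    exact mul_le_mul_of_nonneg_left h (inv_pos.2 hα).le
  obtain ⟨hint, hval⟩ := integrable_inv_add_sq ht
  have hb := norm_integral_le_of_norm_le (hint.const_mul M) (Filter.Eventually.of_forall hpt)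
  rw [integral_const_mul, hval, integral_sub hint
    (integrable_finsetSum _ fun i hi => (integrable_inv_add_sq (hpos i hi)).1.mul_const _),
    integral_finsetSum _
      (fun i hi => (integrable_inv_add_sq (hpos i hi)).1.mul_const _), hval] at hb
  have hsum : ∑ i ∈ s, ∫ y : ℝ, (α * v i + β + y ^ 2)⁻¹ * (Lagrange.basis s v i).eval t
      = Real.pi * ∑ i ∈ s, (√(α * v i + β))⁻¹ * (Lagrange.basis s v i).eval t := by
    rw [Finset.mul_sum]
    refine Finset.sum_congr rfl fun i hi => ?_
    rw [integral_mul_const, (integrable_inv_add_sq (hpos i hi)).2, mul_assoc]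
  rw [hsum, ← hI, ← mul_sub, Real.norm_eq_abs, abs_mul, abs_of_pos Real.pi_pos,
    mul_left_comm] at hb
  have hb' := le_of_mul_le_mul_left hb Real.pi_pos
  have hsq : 0 < √(α * t + β) := Real.sqrt_pos.2 ht
  set P := (Lagrange.interpolate s v fun i => (√(α * v i + β))⁻¹).eval t
  have : √(α * t + β) * P - 1 = -(√(α * t + β) * ((√(α * t + β))⁻¹ - P)) := by
    field_simp
    ring
  rw [this, abs_neg, abs_mul, abs_of_pos hsq]
  calc _ ≤ √(α * t + β) * (M * (√(α * t + β))⁻¹) := mul_le_mul_of_nonneg_left hb' hsq.le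
    _ = M := by field_simp

open MeasureTheory in
/-- Duality: the divided difference at the nodes kills polynomials of degree `< #s - 1`, and its
value at `t ↦ (α t + β)^(-1/2)` is an integral of a function of constant sign. -/
lemma dual_bound {s : Finset ℕ} {v : ℕ → ℝ} (hs : s.Nonempty) (hv : Set.InjOn v s)
    {α β δ r B : ℝ} (hα : 0 < α) (hpos : ∀ i ∈ s, 0 < α * v i + β) (hr : 0 ≤ r) (hB : 0 < B)
    (hN : ∀ y ∈ Icc (-r) r, ∏ i ∈ s, (v i + (β + y ^ 2) / α) ≤ B)
    (q : Polynomial ℝ) (hq : q.natDegree + 1 < s.card)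
    (hδ : ∀ i ∈ s, |√(α * v i + β) * q.eval (v i) - 1| ≤ δ) :
    2 * r / B ≤ Real.pi * α * (δ * ∑ i ∈ s,
      |Lagrange.nodalWeight s v i| * (√(α * v i + β))⁻¹) := by
  set w := Lagrange.nodalWeight s v with hw
  -- the divided difference of `q` is its coefficient of degree `#s - 1`
  have hwq : ∑ i ∈ s, w i * q.eval (v i) = 0 := by
    have hdeg : q.degree < s.card :=
      lt_of_le_of_lt Polynomial.degree_le_natDegree (by exact_mod_cast (by omega))
    have h := Lagrange.coeff_eq_sum hv hdeg
    rw [Polynomial.coeff_eq_zero_of_natDegree_lt (by omega)] at h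
    rw [h]
    refine Finset.sum_congr rfl fun i hi => ?_
    rw [hw, Lagrange.nodalWeight, Finset.prod_inv_distrib, div_eq_inv_mul]
  set D := ∑ i ∈ s, w i * (√(α * v i + β))⁻¹ with hD
  have hDle : |D| ≤ δ * ∑ i ∈ s, |w i| * (√(α * v i + β))⁻¹ := by
    have : D = ∑ i ∈ s, w i * ((√(α * v i + β))⁻¹ - q.eval (v i)) := by
      simp only [mul_sub, Finset.sum_sub_distrib, hwq, sub_zero, hD]
    rw [this, Finset.mul_sum]
    refine (Finset.abs_sum_le_sum_abs _ _).trans (Finset.sum_le_sum fun i hi => ?_)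
    have hsq : 0 < √(α * v i + β) := Real.sqrt_pos.2 (hpos i hi)
    rw [abs_mul, mul_left_comm]
    refine mul_le_mul_of_nonneg_left ?_ (abs_nonneg _)
    have : (√(α * v i + β))⁻¹ - q.eval (v i)
        = -((√(α * v i + β) * q.eval (v i) - 1) * (√(α * v i + β))⁻¹) := by
      field_simp
      ring
    rw [this, abs_neg, abs_mul, abs_of_pos (inv_pos.2 hsq)]
    exact mul_le_mul_of_nonneg_right (hδ i hi) (inv_pos.2 hsq).le
  -- `G y` is, up to sign, the nodal polynomial at the pole `-(β + y²) / α`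
  set G : ℝ → ℝ := fun y => ∏ i ∈ s, (v i + (β + y ^ 2) / α) with hG
  have hfac : ∀ i ∈ s, ∀ y : ℝ, 0 < v i + (β + y ^ 2) / α := by
    intro i hi y
    have : v i + (β + y ^ 2) / α = (α * v i + β + y ^ 2) / α := by field_simp; ring
    rw [this]
    exact div_pos (by nlinarith [hpos i hi, sq_nonneg y]) hα
  have hGpos : ∀ y, 0 < G y := fun y => Finset.prod_pos fun i hi => hfac i hi y
  have hpt : ∀ y : ℝ, ∑ i ∈ s, w i * (α * v i + β + y ^ 2)⁻¹
      = (-α⁻¹ * (-1) ^ s.card) * (G y)⁻¹ := by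
    intro y
    have h1 := sum_nodalWeight_mul_inv hs hv (z := -((β + y ^ 2) / α))
      (fun i hi => by linarith [hfac i hi y])
    have h2 : (Lagrange.nodal s v).eval (-((β + y ^ 2) / α)) = (-1) ^ s.card * G y := by
      rw [Lagrange.eval_nodal, hG, ← Finset.prod_const, ← Finset.prod_mul_distrib]
      exact Finset.prod_congr rfl fun i _ => by ring
    rw [h2, mul_inv] at h1
    have hone : ((-1 : ℝ) ^ s.card)⁻¹ = (-1) ^ s.card := by
      rw [← inv_pow]; norm_num
    rw [hone] at h1
    rw [mul_assoc, ← h1, Finset.mul_sum]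
    refine Finset.sum_congr rfl fun i hi => ?_
    have h3 : (α * v i + β + y ^ 2)⁻¹ = -α⁻¹ * (-((β + y ^ 2) / α) - v i)⁻¹ := by
      rw [neg_mul, ← mul_inv, ← inv_neg]
      congr 1
      field_simp
      ring
    rw [h3]
    ring
  have hint : ∀ i ∈ s, Integrable fun y : ℝ => w i * (α * v i + β + y ^ 2)⁻¹ :=
    fun i hi => (integrable_inv_add_sq (hpos i hi)).1.const_mul _
  have hc : -α⁻¹ * (-1 : ℝ) ^ s.card ≠ 0 :=
    mul_ne_zero (neg_ne_zero.2 (inv_ne_zero hα.ne')) (pow_ne_zero _ (by norm_num))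
  have hGint : Integrable fun y => (G y)⁻¹ := by
    have h := integrable_finsetSum s hint
    simp only [hpt] at h
    exact (integrable_const_mul_iff (isUnit_iff_ne_zero.2 hc) _).1 h
  have hval : Real.pi * D = (-α⁻¹ * (-1) ^ s.card) * ∫ y, (G y)⁻¹ := by
    rw [← integral_const_mul]
    simp only [← hpt]
    rw [integral_finsetSum s hint, hD, Finset.mul_sum]
    refine Finset.sum_congr rfl fun i hi => ?_
    rw [integral_const_mul, (integrable_inv_add_sq (hpos i hi)).2]
    ring
  have hlow : 2 * r / B ≤ ∫ y, (G y)⁻¹ := by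
    calc 2 * r / B = ∫ _ in Icc (-r) r, B⁻¹ := by
          rw [setIntegral_const, Real.volume_real_Icc_of_le (by linarith), smul_eq_mul]
          ring
      _ ≤ ∫ y in Icc (-r) r, (G y)⁻¹ := by
          refine setIntegral_mono_on (integrable_const _) hGint.integrableOn
            measurableSet_Icc fun y hy => ?_
          exact inv_anti₀ (hGpos y) (hN y hy)
      _ ≤ ∫ y, (G y)⁻¹ := setIntegral_le_integral hGint
          (Filter.Eventually.of_forall fun y => (inv_pos.2 (hGpos y)).le)
  have habs : Real.pi * |D| = α⁻¹ * ∫ y, (G y)⁻¹ := by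
    rw [← abs_of_pos Real.pi_pos, ← abs_mul, hval, abs_mul, abs_mul, abs_neg, abs_pow, abs_neg,
      abs_one, one_pow, mul_one, abs_of_pos (inv_pos.2 hα),
      abs_of_nonneg ((div_nonneg (by linarith) hB.le).trans hlow)]
  calc 2 * r / B ≤ ∫ y, (G y)⁻¹ := hlow
    _ = α * (Real.pi * |D|) := by rw [habs]; field_simp
    _ = Real.pi * α * |D| := by ring
    _ ≤ _ := mul_le_mul_of_nonneg_left hDle (by positivity)

/-! ### The upper estimate -/

/-- A polynomial of degree at most the number of nodes that vanishes at all nodes is a multiple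
of the nodal polynomial. -/
lemma eq_C_mul_nodal {s : Finset ℕ} {v : ℕ → ℝ} (hv : Set.InjOn v s) (P : Polynomial ℝ)
    (hP : P.natDegree ≤ s.card) (h0 : ∀ i ∈ s, P.eval (v i) = 0) :
    P = Polynomial.C (P.coeff s.card) * Lagrange.nodal s v := by
  refine Polynomial.eq_of_degree_sub_lt_of_eval_index_eq s hv ?_ fun i hi => ?_
  · rw [Polynomial.degree_lt_iff_coeff_zero]
    intro k hk
    rw [Polynomial.coeff_sub, Polynomial.coeff_C_mul]
    rcases hk.eq_or_lt with rfl | hk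
    · have h : (Lagrange.nodal s v).coeff s.card = 1 := by
        have := (Lagrange.nodal_monic (s := s) (v := v)).coeff_natDegree
        rwa [Lagrange.natDegree_nodal] at this
      rw [h, mul_one, sub_self]
    · have h : (Lagrange.nodal s v).coeff k = 0 :=
        Polynomial.coeff_eq_zero_of_natDegree_lt (by rwa [Lagrange.natDegree_nodal])
      rw [Polynomial.coeff_eq_zero_of_natDegree_lt (hP.trans_lt hk), h, mul_zero, sub_zero]
  · rw [h0 i hi, Polynomial.eval_mul, Lagrange.eval_nodal_at_node hi, mul_zero]

/-- After the substitution `x² = α t + β` that maps `[a², 1]` onto `[-1, 1]`, the point `x = 0`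
becomes `t = -(1 + a²) / (1 - a²)`, that is `-cosh θ` with some `θ ≥ 2 a`. -/
lemma cosh_two_mul_le {a : ℝ} (ha : 0 ≤ a) (ha1 : a < 1) :
    Real.cosh (2 * a) ≤ (1 + a ^ 2) / (1 - a ^ 2) := by
  have hlog : 2 * a ≤ Real.log (1 + a) - Real.log (1 - a) := by
    have h := Real.hasSum_log_sub_log_of_abs_lt_one (abs_lt.2 ⟨by linarith, ha1⟩)
    have := sum_le_hasSum {0} (fun i _ => by positivity) h
    simpa using this
  have hE : Real.exp (2 * a) ≤ (1 + a) / (1 - a) := by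
    rw [← Real.log_div (by linarith) (by linarith)] at hlog
    rwa [← Real.le_log_iff_exp_le (div_pos (by linarith) (by linarith))]
  have hE1 : 1 ≤ Real.exp (2 * a) := Real.one_le_exp (by linarith)
  have h2 : (0 : ℝ) < 1 - a ^ 2 := by nlinarith
  rw [le_div_iff₀ (by linarith)] at hE
  rw [Real.cosh_eq, Real.exp_neg, le_div_iff₀ h2]
  set E := Real.exp (2 * a)
  have hE0 : 0 < E := by linarith
  have hEi : E * E⁻¹ = 1 := mul_inv_cancel₀ hE0.ne'
  have : (E + E⁻¹) * E = E ^ 2 + 1 := by field_simp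
  -- with `R = (1 + a) / (1 - a)` the claim reads `E + E⁻¹ ≤ R + R⁻¹`
  have key : (E * (1 - a) - (1 + a)) * (E * (1 + a) - (1 - a)) ≤ 0 :=
    mul_nonpos_of_nonpos_of_nonneg (by linarith) (by nlinarith)
  have : E * ((E + E⁻¹) / 2 * (1 - a ^ 2)) ≤ E * (1 + a ^ 2) := by nlinarith
  exact le_of_mul_le_mul_left this hE0

/-- Zeros of the Chebyshev polynomial `T_n`, indexed by `i < n`. -/
noncomputable def chebZero (n i : ℕ) : ℝ := Real.cos ((2 * i + 1) * Real.pi / (2 * n))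

lemma chebZero_injOn (n : ℕ) : Set.InjOn (chebZero n) (Finset.range n) := by
  intro i hi j hj h
  simp only [Finset.coe_range, Set.mem_Iio] at hi hj
  have hn : (0 : ℝ) < n := by exact_mod_cast (Nat.zero_le i).trans_lt hi
  have hmem : ∀ k : ℕ, k < n → (2 * k + 1) * Real.pi / (2 * n) ∈ Set.Icc 0 Real.pi := by
    intro k hk
    have hk' : (k : ℝ) + 1 ≤ n := by exact_mod_cast hk
    refine ⟨by positivity, ?_⟩
    rw [div_le_iff₀ (by positivity)]
    nlinarith [Real.pi_pos]
  have := Real.injOn_cos (hmem i hi) (hmem j hj) h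
  field_simp at this
  have : (i : ℝ) = j := by linarith
  exact_mod_cast this

lemma eval_T_chebZero {n i : ℕ} (hi : i < n) :
    (Polynomial.Chebyshev.T ℝ n).eval (chebZero n i) = 0 := by
  have hn : (n : ℝ) ≠ 0 := by
    have : 0 < n := (Nat.zero_le i).trans_lt hi
    positivity
  rw [chebZero, Polynomial.Chebyshev.T_real_cos, Real.cos_eq_zero_iff]
  refine ⟨i, ?_⟩
  push_cast
  field_simp

/-- Growth of the Chebyshev polynomial to the right of `[-1, 1]`. -/
lemma exp_le_T {n : ℕ} {a τ : ℝ} (ha : 0 ≤ a) (h : Real.cosh (2 * a) ≤ τ) :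
    Real.exp (2 * n * a) / 2 ≤ (Polynomial.Chebyshev.T ℝ n).eval τ := by
  have h1 : 1 ≤ τ := (Real.one_le_cosh _).trans h
  rw [← Real.cosh_arcosh h1] at h ⊢
  have h0 : 2 * a ≤ Real.arcosh τ := by
    rwa [Real.cosh_le_cosh, abs_of_nonneg (by positivity),
      abs_of_nonneg (Real.arcosh_nonneg h1)] at h
  rw [Polynomial.Chebyshev.T_real_cosh]
  calc Real.exp (2 * n * a) / 2 ≤ Real.cosh (2 * n * a) := by
        rw [Real.cosh_eq]; linarith [Real.exp_pos (-(2 * n * a))]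
    _ ≤ _ := by
        rw [Real.cosh_le_cosh, abs_of_nonneg (by positivity),
          abs_of_nonneg (mul_nonneg (by simp) (Real.arcosh_nonneg h1))]
        push_cast
        have : (0 : ℝ) ≤ n := n.cast_nonneg
        nlinarith

/-- Upper estimate of the approximation error. The approximant is `x * P(x²)`, rescaled, where `P`
interpolates the inverse square root at the zeros of the Chebyshev polynomial `T_{m+1}`. -/
lemma Lm_le_exp {m : ℕ} {a : ℝ} (ha : 0 < a) (ha1 : a < 1) :
    Lm m a ≤ 2 * Real.exp (-(2 * (m + 1) * a)) := by
  set n := m + 1 with hn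
  set α : ℝ := (1 - a ^ 2) / 2 with hα
  set β : ℝ := (1 + a ^ 2) / 2 with hβ
  have ha2 : a ^ 2 < 1 := by nlinarith
  have hα0 : 0 < α := by rw [hα]; linarith
  have hcz : ∀ i, -1 ≤ chebZero n i := fun i => Real.neg_one_le_cos _
  have hpos : ∀ t : ℝ, -1 ≤ t → 0 < α * t + β := by
    intro t ht
    have : a ^ 2 ≤ α * t + β := by rw [hα, hβ]; nlinarith
    have : 0 < a ^ 2 := by positivity
    linarith
  set P := Lagrange.interpolate (Finset.range n) (chebZero n)
    fun i => (√(α * chebZero n i + β))⁻¹ with hPdef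
  have hPdeg : P.natDegree ≤ m := by
    have := Lagrange.degree_interpolate_lt (s := Finset.range n) (v := chebZero n)
      (fun i => (√(α * chebZero n i + β))⁻¹) (chebZero_injOn n)
    rw [← hPdef, Finset.card_range] at this
    have : P.natDegree < n ∨ P = 0 := by
      by_cases h0 : P = 0
      · exact Or.inr h0
      · exact Or.inl ((Polynomial.natDegree_lt_iff_degree_lt h0).2 this)
    rcases this with h | h
    · omega
    · simp [h]
  -- the interpolation error is governed by the growth of the Chebyshev polynomial
  have hT := eq_C_mul_nodal (chebZero_injOn n) (Polynomial.Chebyshev.T ℝ n)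
    (by simp) (fun i hi => eval_T_chebZero (Finset.mem_range.1 hi))
  have hc : (Polynomial.Chebyshev.T ℝ n).coeff (Finset.range n).card ≠ 0 := by
    intro h
    rw [h] at hT
    exact Polynomial.Chebyshev.T_ne_zero ℝ n (by rw [hT]; simp)
  have herr : ∀ t ∈ Icc (-1 : ℝ) 1,
      |√(α * t + β) * P.eval t - 1| ≤ 2 * Real.exp (-(2 * (m + 1) * a)) := by
    intro t ht
    refine interp_err (by simp [hn]) (chebZero_injOn n) hα0 (fun i _ => hpos _ (hcz i))
      (hpos t ht.1) fun y => ?_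
    have h1 : |(Polynomial.Chebyshev.T ℝ n).eval t| ≤ 1 :=
      Polynomial.Chebyshev.abs_eval_T_real_le_one n (abs_le.2 ht)
    have h2 : Real.exp (2 * n * a) / 2 ≤
        |(Polynomial.Chebyshev.T ℝ n).eval (-((β + y ^ 2) / α))| := by
      rw [Polynomial.Chebyshev.T_eval_neg, abs_mul]
      have : |((((n : ℤ).negOnePow : ℤˣ) : ℤ) : ℝ)| = 1 := by
        rcases Int.units_eq_one_or ((n : ℤ).negOnePow) with h | h <;> simp [h]
      rw [this, one_mul]
      refine (exp_le_T ha.le ?_).trans (le_abs_self _)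
      refine (cosh_two_mul_le ha.le ha1).trans ?_
      rw [hα, hβ, div_le_div_iff₀ (by linarith) (by linarith)]
      nlinarith [sq_nonneg y]
    have h3 : |(Polynomial.Chebyshev.T ℝ n).eval t| ≤ 2 * Real.exp (-(2 * (m + 1) * a)) *
        |(Polynomial.Chebyshev.T ℝ n).eval (-((β + y ^ 2) / α))| := by
      refine h1.trans ?_
      have he : Real.exp (-(2 * (m + 1) * a)) * Real.exp (2 * n * a) = 1 := by
        rw [← Real.exp_add, hn]; push_cast; simp
      nlinarith [Real.exp_pos (-(2 * (m + 1) * a))]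
    rw [hT] at h3
    simp only [Polynomial.eval_mul, Polynomial.eval_C, abs_mul] at h3
    have := abs_pos.2 hc
    refine le_of_mul_le_mul_left ?_ this
    linarith
  set p : Polynomial ℝ := Polynomial.X *
    P.comp (Polynomial.C α⁻¹ * (Polynomial.X ^ 2 - Polynomial.C β)) with hp
  have hpe : ∀ x, p.eval x = x * P.eval (α⁻¹ * (x ^ 2 - β)) := by
    intro x; simp [hp, Polynomial.eval_comp]
  have hpdeg : p.natDegree ≤ 2 * m + 1 := by
    have h1 : (Polynomial.C α⁻¹ * (Polynomial.X ^ 2 - Polynomial.C β)).natDegree ≤ 2 := by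
      compute_degree
    calc p.natDegree ≤ 1 + P.natDegree *
          (Polynomial.C α⁻¹ * (Polynomial.X ^ 2 - Polynomial.C β)).natDegree := by
          refine Polynomial.natDegree_mul_le.trans ?_
          rw [Polynomial.natDegree_X]
          gcongr
          exact Polynomial.natDegree_comp_le
      _ ≤ 1 + m * 2 := by gcongr
      _ = 2 * m + 1 := by ring
  refine Lm_le_of_bound ha1 p hpdeg fun x hx => ?_
  have hposx : ∀ x ∈ Icc a 1, |p.eval x - 1| ≤ 2 * Real.exp (-(2 * (m + 1) * a)) := by
    intro x hx
    have hx2 : a ^ 2 ≤ x ^ 2 := by nlinarith [hx.1]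
    have hx3 : x ^ 2 ≤ 1 := by nlinarith [hx.1, hx.2]
    have hα1 : α⁻¹ * α = 1 := inv_mul_cancel₀ hα0.ne'
    have := herr (α⁻¹ * (x ^ 2 - β)) ?_
    · rwa [← mul_assoc, mul_inv_cancel₀ hα0.ne', one_mul, sub_add_cancel,
        Real.sqrt_sq (by linarith [hx.1]), ← hpe] at this
    · constructor
      · rw [inv_mul_eq_div, le_div_iff₀ hα0, hα, hβ]; linarith
      · rw [inv_mul_eq_div, div_le_iff₀ hα0, hα, hβ]; linarith
  rcases hx with hx | hx
  · have := hposx (-x) ⟨by linarith [hx.2], by linarith [hx.1]⟩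
    rw [Real.sign_of_neg (by linarith [hx.2])]
    have hodd : p.eval (-x) = - p.eval x := by rw [hpe, hpe]; simp
    rw [hodd] at this
    rw [← abs_neg]
    convert this using 2
    ring
  · rw [Real.sign_of_pos (by linarith [hx.1])]
    exact hposx x hx

/-! ### The lower estimate -/

open Polynomial.Chebyshev in
/-- The polynomial `(X² - 1) U_m`, whose zeros are the extremal points of `T_{m+1}`. -/
noncomputable def extPoly (m : ℕ) : Polynomial ℝ := (Polynomial.X ^ 2 - 1) * U ℝ m

open Polynomial.Chebyshev in
lemma node_injOn (k : ℕ) : Set.InjOn (node k) (Finset.range (k + 1)) :=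
  (strictAntiOn_node k).injOn

open Polynomial.Chebyshev in
lemma eval_extPoly_node (m i : ℕ) : (extPoly m).eval (node (m + 1) i) = 0 := by
  have hθ : ((m : ℤ) + 1 : ℝ) * (i * Real.pi / ((m + 1 : ℕ) : ℝ)) = i * Real.pi := by
    push_cast; field_simp
  have h := U_real_cos (i * Real.pi / ((m + 1 : ℕ) : ℝ)) m
  rw [hθ, Real.sin_nat_mul_pi] at h
  have h2 := Real.sin_sq_add_cos_sq (i * Real.pi / ((m + 1 : ℕ) : ℝ))
  simp only [extPoly, Polynomial.eval_mul, Polynomial.eval_sub, Polynomial.eval_pow,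
    Polynomial.eval_X, Polynomial.eval_one, node]
  linear_combination (-Real.sin (i * Real.pi / ((m + 1 : ℕ) : ℝ))) * h +
    (U ℝ m).eval (Real.cos (i * Real.pi / ((m + 1 : ℕ) : ℝ))) * h2

open Polynomial.Chebyshev in
lemma derivative_extPoly (m : ℕ) :
    (extPoly m).derivative = ((m : Polynomial ℝ) + 1) * T ℝ (m + 1) + Polynomial.X * U ℝ m := by
  have h : extPoly m = T ℝ (m + 2) - Polynomial.X * T ℝ (m + 1) := by
    rw [extPoly]
    linear_combination -(one_sub_X_sq_mul_U_eq_pol_in_T ℝ (m : ℤ))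
  have h1 := T_derivative_eq_U (R := ℝ) ((m : ℤ) + 2)
  have h2 := T_derivative_eq_U (R := ℝ) ((m : ℤ) + 1)
  have h3 := U_eq_X_mul_U_add_T ℝ (m : ℤ)
  rw [show (m : ℤ) + 2 - 1 = m + 1 by ring] at h1
  rw [show (m : ℤ) + 1 - 1 = m by ring] at h2
  rw [h, Polynomial.derivative_sub, Polynomial.derivative_mul, h1, h2, Polynomial.derivative_X]
  push_cast
  linear_combination (m + 2 : Polynomial ℝ) * h3

lemma abs_negOnePow (n : ℤ) : |((n.negOnePow : ℤ) : ℝ)| = 1 := by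
  rcases Int.units_eq_one_or n.negOnePow with h | h <;> simp [h]

open Polynomial.Chebyshev in
/-- The derivative at the nodes is bounded below, which bounds the nodal weights above: they are
at most `|c| / (m + 1)`, where `c` is the leading coefficient of `extPoly m`. -/
lemma le_abs_eval_derivative_extPoly {m i : ℕ} (hi : i < m + 2) :
    (m + 1 : ℝ) ≤ |(extPoly m).derivative.eval (node (m + 1) i)| := by
  have hT : |(T ℝ (m + 1)).eval (node (m + 1) i)| = 1 := by
    have := eval_T_real_node (n := m + 1) (i := i) (by simp; omega)
    push_cast at this
    rw [this, abs_neg_one_pow]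
  have h0 := eval_extPoly_node m i
  set x := node (m + 1) i with hx
  have hW : (extPoly m).derivative.eval x =
      (m + 1) * (T ℝ (m + 1)).eval x + x * (U ℝ m).eval x := by
    simp [derivative_extPoly]
  have hU : x * (U ℝ m).eval x = 0 ∨
      x * (U ℝ m).eval x = (m + 1) * (T ℝ (m + 1)).eval x := by
    simp only [extPoly, Polynomial.eval_mul, Polynomial.eval_sub, Polynomial.eval_pow,
      Polynomial.eval_X, Polynomial.eval_one, mul_eq_zero] at h0
    rcases h0 with h0 | h0
    · right
      have : (x - 1) * (x + 1) = 0 := by linear_combination h0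
      rcases mul_eq_zero.1 this with h | h
      · rw [show x = 1 by linarith]; simp
      · rw [show x = -1 by linarith, T_eval_neg_one, U_eval_neg_one, Int.negOnePow_succ]
        push_cast
        ring
    · left; rw [h0, mul_zero]
  have hm : (0 : ℝ) ≤ (m : ℝ) + 1 := by positivity
  rw [hW]
  rcases hU with h | h
  · rw [h, add_zero, abs_mul, hT, mul_one]; exact le_abs_self _
  · rw [h, ← two_mul, abs_mul, abs_mul, hT, mul_one, abs_two, abs_of_nonneg hm]; linarith

open Polynomial.Chebyshev in
lemma extPoly_eq (m : ℕ) : ∃ c : ℝ, c ≠ 0 ∧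
    extPoly m = Polynomial.C c * Lagrange.nodal (Finset.range (m + 2)) (node (m + 1)) := by
  have h := eq_C_mul_nodal (node_injOn (m + 1)) (extPoly m) ?_
    (fun i _ => eval_extPoly_node m i)
  · refine ⟨_, fun h0 => ?_, h⟩
    rw [h0, Polynomial.C_0, zero_mul] at h
    have := le_abs_eval_derivative_extPoly (m := m) (i := 0) (by omega)
    rw [h] at this
    simp at this
    have hm : (0 : ℝ) ≤ m := m.cast_nonneg
    linarith
  · rw [Finset.card_range, extPoly]
    refine Polynomial.natDegree_mul_le.trans ?_
    rw [natDegree_U_natCast]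
    have : (Polynomial.X ^ 2 - 1 : Polynomial ℝ).natDegree ≤ 2 := by compute_degree
    omega

open Polynomial.Chebyshev in
/-- Growth of `extPoly m` just to the left of `[-1, 1]`: at `-cosh ζ` its absolute value is
`sinh ζ * sinh ((m + 1) ζ)`. -/
lemma abs_eval_extPoly_le {m : ℕ} {η τ : ℝ} (hη : 0 ≤ η) (hη1 : η ≤ 1) (hτ : 1 ≤ τ)
    (hτη : τ ≤ Real.cosh η) : |(extPoly m).eval (-τ)| ≤ η * Real.exp ((m + 1) * η) := by
  rw [← Real.cosh_arcosh hτ, Real.cosh_le_cosh, abs_of_nonneg hη,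
    abs_of_nonneg (Real.arcosh_nonneg hτ)] at hτη
  have h0 := Real.arcosh_nonneg hτ
  rw [← Real.cosh_arcosh hτ]
  set ζ := Real.arcosh τ
  have hU := U_real_cosh ζ m
  have e : |(extPoly m).eval (-Real.cosh ζ)| = Real.sinh ζ * Real.sinh ((m + 1) * ζ) := by
    simp only [extPoly, Polynomial.eval_mul, Polynomial.eval_sub, Polynomial.eval_pow,
      Polynomial.eval_X, Polynomial.eval_one]
    rw [U_eval_neg, neg_sq, mul_left_comm, abs_mul, abs_negOnePow, one_mul, Real.cosh_sq',
      show (1 + Real.sinh ζ ^ 2 - 1) * (U ℝ m).eval (Real.cosh ζ) =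
        Real.sinh ζ * ((U ℝ m).eval (Real.cosh ζ) * Real.sinh ζ) by ring, hU]
    push_cast
    exact abs_of_nonneg (mul_nonneg (Real.sinh_nonneg_iff.2 h0)
      (Real.sinh_nonneg_iff.2 (by positivity)))
  have hs1 : Real.sinh ζ ≤ 2 * η := by
    refine (Real.sinh_le_sinh.2 hτη).trans ?_
    have h1 := Real.abs_exp_sub_one_le (x := η) (by rwa [abs_of_nonneg hη])
    have h2 := Real.abs_exp_sub_one_le (x := -η) (by rwa [abs_neg, abs_of_nonneg hη])
    rw [abs_neg, abs_of_nonneg hη] at h2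
    rw [abs_of_nonneg hη] at h1
    rw [Real.sinh_eq]
    linarith [(abs_le.1 h1).2, (abs_le.1 h2).1]
  have hs2 : Real.sinh ((m + 1) * ζ) ≤ Real.exp ((m + 1) * η) / 2 := by
    refine (Real.sinh_le_sinh.2 (mul_le_mul_of_nonneg_left hτη (by positivity))).trans ?_
    rw [Real.sinh_eq]
    linarith [Real.exp_pos (-((m + 1) * η))]
  rw [e]
  calc _ ≤ (2 * η) * (Real.exp ((m + 1) * η) / 2) :=
        mul_le_mul hs1 hs2 (Real.sinh_nonneg_iff.2 (by positivity)) (by positivity)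
    _ = _ := by ring

lemma one_add_sq_le_cosh (x : ℝ) : 1 + x ^ 2 / 2 ≤ Real.cosh x := by
  have h1 : Real.cosh x = 1 + 2 * Real.sinh (x / 2) ^ 2 := by
    rw [show x = 2 * (x / 2) by ring, Real.cosh_two_mul, Real.cosh_sq']
    ring_nf
  have h2 : (x / 2) ^ 2 ≤ Real.sinh (x / 2) ^ 2 := by
    rw [sq_le_sq]
    rcases le_total 0 (x / 2) with h | h
    · rw [abs_of_nonneg h, abs_of_nonneg (Real.sinh_nonneg_iff.2 h)]
      exact Real.self_le_sinh_iff.2 h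
    · rw [abs_of_nonpos h, abs_of_nonpos (Real.sinh_nonpos_iff.2 h)]
      linarith [Real.sinh_le_self_iff.2 h]
  rw [h1]; linarith

open Polynomial.Chebyshev in
/-- The sum of `1 / x` over the preimages `x ∈ [a, 1]` of the nodes under `x² = α t + β`. The
node `t = -1` contributes `1 / a`; the others satisfy `x ≥ cos θ ≥ 1 - 2 θ / π`, where
`t = cos (2 θ)`, and are compared with a harmonic sum. -/
lemma sum_inv_sqrt_le {k : ℕ} (hk : 0 < k) {a : ℝ} (ha : 0 < a) (ha1 : a < 1) :
    ∑ i ∈ Finset.range (k + 1),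
      (√((1 - a ^ 2) / 2 * node k i + (1 + a ^ 2) / 2))⁻¹ ≤ 1 / a + k * (1 + Real.log k) := by
  have hk0 : (0 : ℝ) < k := by exact_mod_cast hk
  rw [Finset.sum_range_succ, node_eq_neg_one hk.ne',
    show (1 - a ^ 2) / 2 * -1 + (1 + a ^ 2) / 2 = a ^ 2 by ring, Real.sqrt_sq ha.le, add_comm,
    one_div]
  refine add_le_add le_rfl ?_
  calc _ ≤ ∑ i ∈ Finset.range k, k * (((k - 1 - i : ℕ) : ℝ) + 1)⁻¹ := by
        refine Finset.sum_le_sum fun i hi => ?_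
        have hik : i < k := Finset.mem_range.1 hi
        have hik' : (i : ℝ) < k := by exact_mod_cast hik
        have hc : ((k - 1 - i : ℕ) : ℝ) + 1 = k - i := by
          have : (k - 1 - i) + 1 + i = k := by omega
          have : ((k - 1 - i : ℕ) : ℝ) + 1 + i = k := by exact_mod_cast this
          linarith
        rw [hc, show (k : ℝ) * ((k : ℝ) - i)⁻¹ = (((k : ℝ) - i) / k)⁻¹ by
          rw [inv_div, div_eq_mul_inv]]
        have hp : 0 < ((k : ℝ) - i) / k := div_pos (by linarith) hk0
        refine inv_anti₀ hp ?_
        refine Real.le_sqrt_of_sq_le ?_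
        set θ : ℝ := i * Real.pi / k / 2 with hθ
        have hθ0 : 0 ≤ θ := by positivity
        have hθ1 : θ ≤ Real.pi / 2 := by
          rw [hθ]
          have : i * Real.pi / k ≤ Real.pi := by
            rw [div_le_iff₀ hk0]; nlinarith [Real.pi_pos]
          linarith
        have hcos := Real.one_sub_mul_le_cos hθ0 hθ1
        have heq : 1 - 2 / Real.pi * θ = ((k : ℝ) - i) / k := by
          rw [hθ]; field_simp [Real.pi_pos.ne']
        rw [heq] at hcos
        have hnode : node k i = 2 * Real.cos θ ^ 2 - 1 := by
          rw [← Real.cos_two_mul, node, hθ]; congr 1; ring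
        have h1 : node k i ≤ 1 := node_mem_Icc.2
        have h2 : (((k : ℝ) - i) / k) ^ 2 ≤ Real.cos θ ^ 2 := by gcongr
        nlinarith [sq_nonneg a]
    _ = k * ((harmonic k : ℚ) : ℝ) := by
        rw [← Finset.mul_sum, Finset.sum_range_reflect (fun j => ((j : ℝ) + 1)⁻¹) k, harmonic]
        push_cast
        rfl
    _ ≤ _ := by
        gcongr
        exact harmonic_le_one_add_log k

/-- The odd part of a polynomial of degree at most `2m+1`. -/
lemma exists_odd_part {m : ℕ} (p : Polynomial ℝ) (hp : p.natDegree ≤ 2 * m + 1) :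
    ∃ Q : Polynomial ℝ, Q.natDegree ≤ m ∧ ∀ x, p.eval x - p.eval (-x) = x * Q.eval (x ^ 2) := by
  have key : ∀ n : ℕ, ∃ Q : Polynomial ℝ, Q.natDegree ≤ n ∧ ∀ x : ℝ,
      ∑ i ∈ Finset.range (2 * (n + 1)), p.coeff i * (x ^ i - (-x) ^ i) = x * Q.eval (x ^ 2) := by
    intro n
    induction n with
    | zero =>
      refine ⟨Polynomial.C (2 * p.coeff 1), (Polynomial.natDegree_C _).le, fun x => ?_⟩
      simp [Finset.sum_range_succ]; ring
    | succ n ih =>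
      obtain ⟨Q, hQ, h⟩ := ih
      refine ⟨Q + Polynomial.C (2 * p.coeff (2 * n + 3)) * Polynomial.X ^ (n + 1), ?_, ?_⟩
      · refine (Polynomial.natDegree_add_le _ _).trans (max_le (by omega) ?_)
        exact Polynomial.natDegree_C_mul_X_pow_le _ _
      · intro x
        rw [show 2 * (n + 1 + 1) = 2 * (n + 1) + 1 + 1 by ring, Finset.sum_range_succ,
          Finset.sum_range_succ, h x, (even_two_mul (n + 1)).neg_pow,
          (even_two_mul (n + 1)).add_one.neg_pow]
        simp only [Polynomial.eval_add, Polynomial.eval_mul, Polynomial.eval_C,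
          Polynomial.eval_pow, Polynomial.eval_X]
        rw [show 2 * (n + 1) + 1 = 2 * n + 3 by ring]
        ring
  obtain ⟨Q, hQ, h⟩ := key m
  refine ⟨Q, hQ, fun x => ?_⟩
  rw [← h x, Polynomial.eval_eq_sum_range' (n := 2 * (m + 1)) (by omega) x,
    Polynomial.eval_eq_sum_range' (n := 2 * (m + 1)) (by omega) (-x), ← Finset.sum_sub_distrib]
  exact Finset.sum_congr rfl fun i _ => by ring

open Polynomial.Chebyshev in
/-- Lower estimate. The odd part of `p` is `x * Q(x²)`, and `Q` is tested against the divided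
difference at the extremal points of `T_{m+1}`. The hypothesis `hbig` ensures
`(β + y²) / α ≤ cosh η` whenever `|y| ≤ 1 / (m + 1)`, so that on this range of `y` the poles stay
where the nodal polynomial is controlled. -/
lemma one_le_of_approx {m : ℕ} {a η : ℝ} (ha : 0 < a) (ha1 : a < 1) (p : Polynomial ℝ)
    (hp : p.natDegree ≤ 2 * m + 1) (hX : ∀ x ∈ X a, |p.eval x - Real.sign x| ≤ a)
    (hη : 0 < η) (hη1 : η ≤ 1)
    (hbig : 4 * (a ^ 2 + (1 / (m + 1)) ^ 2) ≤ η ^ 2 * (1 - a ^ 2)) :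
    1 ≤ η * Real.exp ((m + 1) * η) * (1 + (m + 1) * a * (1 + Real.log (m + 1))) := by
  set α : ℝ := (1 - a ^ 2) / 2 with hα
  set β : ℝ := (1 + a ^ 2) / 2 with hβ
  have ha2 : a ^ 2 < 1 := by nlinarith
  have ha3 : 0 < a ^ 2 := by positivity
  have hα0 : 0 < α := by rw [hα]; linarith
  have hk : (0 : ℝ) < m + 1 := by positivity
  have hlow : ∀ i, a ^ 2 ≤ α * node (m + 1) i + β := by
    intro i
    have : -1 ≤ node (m + 1) i := node_mem_Icc.1
    rw [hα, hβ]; nlinarith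
  have hupp : ∀ i, α * node (m + 1) i + β ≤ 1 := by
    intro i
    have : node (m + 1) i ≤ 1 := node_mem_Icc.2
    rw [hα, hβ]; nlinarith
  obtain ⟨Q, hQ, hodd⟩ := exists_odd_part p hp
  set q : Polynomial ℝ := Polynomial.C (1 / 2) *
    Q.comp (Polynomial.C α * Polynomial.X + Polynomial.C β) with hq
  have hqdeg : q.natDegree ≤ m := by
    have h1 : (Polynomial.C α * Polynomial.X + Polynomial.C β).natDegree ≤ 1 := by
      compute_degree
    refine (Polynomial.natDegree_C_mul_le _ _).trans (Polynomial.natDegree_comp_le.trans ?_)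
    calc _ ≤ m * 1 := by gcongr
      _ = m := mul_one m
  obtain ⟨c, hc, hW⟩ := extPoly_eq m
  have hc' : 0 < |c| := abs_pos.2 hc
  have hδ : ∀ i ∈ Finset.range (m + 2),
      |√(α * node (m + 1) i + β) * q.eval (node (m + 1) i) - 1| ≤ a := by
    intro i _
    set x := √(α * node (m + 1) i + β) with hx
    have hx2 : x ^ 2 = α * node (m + 1) i + β := Real.sq_sqrt (ha3.le.trans (hlow i))
    have hxa : a ≤ x := Real.le_sqrt_of_sq_le (hlow i)
    have hx1 : x ≤ 1 := Real.sqrt_le_one.2 (hupp i)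
    have e : x * q.eval (node (m + 1) i) = (p.eval x - p.eval (-x)) / 2 := by
      rw [hodd x, hx2]
      simp [hq, Polynomial.eval_comp]
      ring
    have h1 := hX x (Or.inr ⟨hxa, hx1⟩)
    have h2 := hX (-x) (Or.inl ⟨by linarith, by linarith⟩)
    rw [Real.sign_of_pos (by linarith), abs_le] at h1
    rw [Real.sign_of_neg (by linarith), abs_le] at h2
    rw [e, abs_le]
    constructor <;> linarith [h1.1, h1.2, h2.1, h2.2]
  have hw : ∀ i ∈ Finset.range (m + 2),
      |Lagrange.nodalWeight (Finset.range (m + 2)) (node (m + 1)) i| ≤ |c| / (m + 1) := by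
    intro i hi
    have h := le_abs_eval_derivative_extPoly (Finset.mem_range.1 hi)
    rw [hW, Polynomial.derivative_C_mul, Polynomial.eval_mul, Polynomial.eval_C, abs_mul] at h
    rw [Lagrange.nodalWeight_eq_eval_derivative_nodal hi, abs_inv, inv_le_comm₀ ?_ (by positivity),
      inv_div, div_le_iff₀ hc']
    · linarith
    · by_contra h0
      nlinarith
  -- the factor `|c|` here cancels the one in the bound for the nodal weights
  have hN : ∀ y ∈ Icc (-(1 / (m + 1 : ℝ))) (1 / (m + 1)),
      ∏ i ∈ Finset.range (m + 2), (node (m + 1) i + (β + y ^ 2) / α) ≤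
        η * Real.exp ((m + 1) * η) / |c| := by
    intro y hy
    have hy2 : y ^ 2 ≤ (1 / (m + 1 : ℝ)) ^ 2 := by
      rw [sq_le_sq, abs_of_pos (a := 1 / (m + 1 : ℝ)) (by positivity)]; exact abs_le.2 hy
    set τ := (β + y ^ 2) / α with hτ
    have hτ1 : 1 ≤ τ := by
      rw [hτ, le_div_iff₀ hα0, hα, hβ]; nlinarith [sq_nonneg y]
    have hτ2 : τ ≤ Real.cosh η := by
      refine le_trans ?_ (one_add_sq_le_cosh η)
      rw [hτ, div_le_iff₀ hα0, hα, hβ]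
      nlinarith
    have h := abs_eval_extPoly_le (m := m) hη.le hη1 hτ1 hτ2
    rw [hW, Polynomial.eval_mul, Polynomial.eval_C, abs_mul, Lagrange.eval_nodal,
      Finset.abs_prod] at h
    rw [le_div_iff₀ hc', mul_comm]
    refine le_trans (mul_le_mul_of_nonneg_left ?_ hc'.le) h
    refine (le_abs_self _).trans ?_
    rw [Finset.abs_prod]
    refine (Finset.prod_congr rfl fun i _ => ?_).le
    rw [← abs_neg]; congr 1; ring
  have hexp := Real.exp_pos ((m + 1) * η)
  have hmain := dual_bound (by simp) (node_injOn (m + 1)) hα0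
    (fun i _ => ha3.trans_le (hlow i)) (r := 1 / (m + 1 : ℝ)) (by positivity)
    (by positivity) hN q (by rw [Finset.card_range]; omega) hδ
  have hsum : ∑ i ∈ Finset.range (m + 2),
      |Lagrange.nodalWeight (Finset.range (m + 2)) (node (m + 1)) i| *
        (√(α * node (m + 1) i + β))⁻¹ ≤
      |c| / (m + 1) * (1 / a + (m + 1) * (1 + Real.log (m + 1))) := by
    have := sum_inv_sqrt_le (k := m + 1) (by omega) ha ha1
    push_cast at this
    refine le_trans ?_ (mul_le_mul_of_nonneg_left this (by positivity))
    rw [Finset.mul_sum]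
    refine Finset.sum_le_sum fun i hi => ?_
    exact mul_le_mul_of_nonneg_right (hw i hi) (by positivity)
  have hlog : 0 ≤ Real.log (m + 1) := Real.log_nonneg (by simp)
  have hchain : 2 * (1 / (m + 1 : ℝ)) / (η * Real.exp ((m + 1) * η) / |c|) ≤
      2 * (a * (|c| / (m + 1) * (1 / a + (m + 1) * (1 + Real.log (m + 1))))) := by
    refine hmain.trans (mul_le_mul ?_ ?_ ?_ (by norm_num))
    · have := Real.pi_le_four
      nlinarith
    · exact mul_le_mul_of_nonneg_left hsum ha.le
    · exact mul_nonneg ha.le (Finset.sum_nonneg fun i _ => by positivity)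
  rw [div_le_iff₀ (by positivity)] at hchain
  have e : 2 * (a * (|c| / (m + 1) * (1 / a + (m + 1) * (1 + Real.log (m + 1))))) *
      (η * Real.exp ((m + 1) * η) / |c|) = 2 * (1 / (m + 1 : ℝ)) *
      (η * Real.exp ((m + 1) * η) * (1 + (m + 1) * a * (1 + Real.log (m + 1)))) := by
    field_simp
  rw [e] at hchain
  have : 0 < 2 * (1 / (m + 1 : ℝ)) := by positivity
  exact le_of_mul_le_mul_left (by linarith) this

/-! ### The limit -/

/-- Upper bound for the fixed point. If `2 m a > log m`, then `Lm_le_exp` gives `a ≤ 2 / m`, which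
is absurd for large `m`. -/
lemma mul_le_log {m : ℕ} {a : ℝ} (ha : a ∈ Ioo (0 : ℝ) 1) (hfix : a = Lm m a)
    (hm : 0 < m) (hL : 4 ≤ Real.log m) : 2 * m * a ≤ Real.log m := by
  by_contra! h
  have hm0 : (0 : ℝ) < m := by exact_mod_cast hm
  have h1 : a ≤ 2 * Real.exp (-(2 * (m + 1) * a)) := by
    have := Lm_le_exp (m := m) ha.1 ha.2
    rwa [← hfix] at this
  have h2 : Real.exp (-(2 * (m + 1) * a)) ≤ (m : ℝ)⁻¹ := by
    rw [← Real.exp_log hm0, ← Real.exp_neg, Real.exp_log hm0, Real.exp_le_exp]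
    have := ha.1
    linarith
  have h3 : m * a ≤ 2 := by
    have h4 : a ≤ 2 * (m : ℝ)⁻¹ := by linarith
    calc m * a ≤ m * (2 * (m : ℝ)⁻¹) := by gcongr
      _ = 2 := by field_simp
  linarith

/-- Lower bound for the fixed point, the logarithm of `one_le_of_approx` for an `η` close to
`2 a + 2 / m`. The loss is of order `log log m`. -/
lemma log_sub_le_mul {m : ℕ} {a : ℝ} (ha : a ∈ Ioo (0 : ℝ) 1) (p : Polynomial ℝ)
    (hp : p.natDegree ≤ 2 * m + 1) (hX : ∀ x ∈ X a, |p.eval x - Real.sign x| ≤ a)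
    (hm : 0 < m) (hL : 4 ≤ Real.log m) (hLm : (Real.log m + 10) ^ 2 ≤ m)
    (hup : 2 * m * a ≤ Real.log m) :
    Real.log m - 5 - 3 * Real.log (Real.log m + 5) ≤ 2 * m * a := by
  obtain ⟨ha0, ha1⟩ := ha
  have hm0 : (0 : ℝ) < m := by exact_mod_cast hm
  set L := Real.log m with hLdef
  have haL : a * (L + 10) ≤ 1 / 2 := by
    have : 2 * m * (a * (L + 10)) ≤ 2 * m * (1 / 2) := by nlinarith
    exact le_of_mul_le_mul_left this (by positivity)
  have ha20 : a ≤ 1 / 20 := by nlinarith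
  -- large enough for the hypothesis `hbig` of `one_le_of_approx`; the factor `1 + a²`
  -- makes up for `1 - a²` there
  set η : ℝ := 2 * (a + 1 / (m + 1)) * (1 + a ^ 2) with hη
  have hkη : (m + 1) * η ≤ 2 * m * a + 5 := by
    have e : (m + 1) * η = 2 * m * a + 2 * a + 2 + 2 * a ^ 2 * (m * a + a + 1) := by
      rw [hη]; field_simp
    have h1 : a * (m * a + a + 1) ≤ 1 / 2 := by nlinarith
    rw [e]; nlinarith
  have hη0 : 0 < η := by rw [hη]; positivity
  have hηm : η ≤ (L + 5) / m := by
    rw [le_div_iff₀ hm0]; nlinarith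
  have hη1 : η ≤ 1 := by
    refine hηm.trans ?_
    rw [div_le_one hm0]; nlinarith
  have hbig : 4 * (a ^ 2 + (1 / (m + 1)) ^ 2) ≤ η ^ 2 * (1 - a ^ 2) := by
    have hb : (0 : ℝ) < 1 / (m + 1) := by positivity
    set b : ℝ := 1 / (m + 1)
    have h1 : 1 ≤ (1 + a ^ 2) ^ 2 * (1 - a ^ 2) := by
      have : a ^ 2 ≤ 1 / 2 := by nlinarith
      nlinarith [sq_nonneg a, mul_nonneg (sq_nonneg a) (sq_nonneg a)]
    have h2 : a ^ 2 + b ^ 2 ≤ (a + b) ^ 2 := by nlinarith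
    have h3 : (a + b) ^ 2 * 1 ≤ (a + b) ^ 2 * ((1 + a ^ 2) ^ 2 * (1 - a ^ 2)) := by gcongr
    rw [hη]
    linarith
  have h := one_le_of_approx ha0 ha1 p hp hX hη0 hη1 hbig
  have hlog : Real.log (m + 1) ≤ L + 1 := by
    have e : Real.log (m * Real.exp 1) = L + 1 := by
      rw [Real.log_mul hm0.ne' (Real.exp_pos 1).ne', Real.log_exp]
    rw [← e]
    refine Real.log_le_log (by linarith) ?_
    have : (2 : ℝ) ≤ Real.exp 1 := by linarith [Real.add_one_le_exp (1 : ℝ)]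
    have : (1 : ℝ) ≤ m := by exact_mod_cast hm
    nlinarith
  have hlog0 : 0 ≤ Real.log (m + 1) := Real.log_nonneg (by linarith)
  have h5 : 1 + (m + 1) * a * (1 + Real.log (m + 1)) ≤ (L + 5) ^ 2 := by
    have h6 : (m + 1) * a ≤ L := by linarith
    have : (m + 1) * a * (1 + Real.log (m + 1)) ≤ L * (L + 2) :=
      mul_le_mul h6 (by linarith) (by linarith) (by linarith)
    nlinarith
  have h7 : 1 ≤ (L + 5) / m * Real.exp (2 * m * a + 5) * (L + 5) ^ 2 := by
    refine h.trans ?_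
    gcongr
  have h8 := Real.log_le_log one_pos h7
  have hL5 : 0 < L + 5 := by linarith
  rw [Real.log_one, Real.log_mul (by positivity) (by positivity),
    Real.log_mul (by positivity) (by positivity), Real.log_exp, Real.log_pow,
    Real.log_div hL5.ne' hm0.ne', ← hLdef] at h8
  push_cast at h8
  linarith

lemma tendsto_log_shift_div :
    Tendsto (fun x : ℝ => (5 + 3 * Real.log (x + 5)) / (2 * x)) atTop (nhds 0) := by
  have h1 : Tendsto (fun x : ℝ => x + 5) atTop atTop := tendsto_atTop_add_const_right _ _ tendsto_id
  have h2 := Real.isLittleO_log_id_atTop.comp_tendsto h1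
  have h3 : (fun x : ℝ => x + 5) =O[atTop] (fun x : ℝ => x) := by
    refine Asymptotics.IsBigO.of_bound 2 ?_
    filter_upwards [eventually_ge_atTop 5] with x hx
    rw [Real.norm_of_nonneg (by linarith), Real.norm_of_nonneg (by linarith)]
    linarith
  have h4 : Tendsto (fun x : ℝ => Real.log (x + 5) / x) atTop (nhds 0) :=
    Asymptotics.IsLittleO.tendsto_div_nhds_zero (h2.trans_isBigO h3)
  have h5 := (tendsto_inv_atTop_zero (𝕜 := ℝ)).const_mul (5 / 2)
  have h6 := h5.add (h4.const_mul (3 / 2))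
  simp only [mul_zero, add_zero] at h6
  refine h6.congr' ?_
  filter_upwards [eventually_gt_atTop 0] with x hx
  field_simp

/-- Theorem 5: if `a_m = L_m(a_m)` and `p_m` is the corresponding extremal polynomial,
then `lim_{m→∞} (m / log m) 𝓛(sgn, p_m) = 1/2`. -/
theorem levy_asymptotics (a : ℕ → ℝ) (ha : ∀ m, a m ∈ Ioo (0 : ℝ) 1)
    (hfix : ∀ m, a m = Lm m (a m))
    (p : ℕ → Polynomial ℝ) (hdeg : ∀ m, (p m).natDegree ≤ 2 * m + 1)
    (hext : ∀ m, sSup ((fun x => |(p m).eval x - Real.sign x|) '' X (a m)) = Lm m (a m)) :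
    Tendsto (fun m : ℕ => (m / Real.log m) * levy Real.sign (fun x => (p m).eval x))
      atTop (nhds (1 / 2)) := by
  have hlevy : ∀ m, levy Real.sign (fun x => (p m).eval x) = a m := fun m =>
    levy_eq (ha m) (hfix m) (p m) (hdeg m) (hext m)
  simp_rw [hlevy]
  have hlog : Tendsto (fun m : ℕ => Real.log m) atTop atTop :=
    Real.tendsto_log_atTop.comp tendsto_natCast_atTop_atTop
  have hsmall : ∀ᶠ m : ℕ in atTop, 4 * Real.log m ^ 2 ≤ m := by
    have := ((Real.isLittleO_pow_log_id_atTop (n := 2)).bound (c := 1 / 4) (by norm_num))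
    filter_upwards [tendsto_natCast_atTop_atTop.eventually this] with m hm
    rw [Real.norm_of_nonneg (by positivity), id, Real.norm_of_nonneg (by positivity)] at hm
    linarith
  have hlow : Tendsto (fun m : ℕ => 1 / 2 -
      (5 + 3 * Real.log (Real.log m + 5)) / (2 * Real.log m)) atTop (nhds (1 / 2)) := by
    have h := (tendsto_log_shift_div.comp hlog).const_sub (1 / 2)
    rwa [sub_zero] at h
  refine tendsto_of_tendsto_of_tendsto_of_le_of_le' hlow tendsto_const_nhds ?_ ?_
  · filter_upwards [hsmall, hlog.eventually_ge_atTop 10, eventually_gt_atTop 0] with m h1 h2 h3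
    have hX : ∀ x ∈ X (a m), |(p m).eval x - Real.sign x| ≤ a m := by
      intro x hx
      have := le_csSup (bddAbove_err (ha m).1 (p m)) (mem_image_of_mem _ hx)
      rwa [hext m, ← hfix m] at this
    have hu := mul_le_log (ha m) (hfix m) h3 (by linarith)
    have := log_sub_le_mul (ha m) (p m) (hdeg m) hX h3 (by linarith) (by nlinarith) hu
    have hL : 0 < Real.log m := by linarith
    have e : (m : ℝ) / Real.log m * a m -
        (1 / 2 - (5 + 3 * Real.log (Real.log m + 5)) / (2 * Real.log m)) =
        (2 * m * a m - (Real.log m - 5 - 3 * Real.log (Real.log m + 5))) /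
          (2 * Real.log m) := by
      field_simp; ring
    rw [← sub_nonneg, e]
    exact div_nonneg (by linarith) (by positivity)
  · filter_upwards [hlog.eventually_ge_atTop 10, eventually_gt_atTop 0] with m h2 h3
    have hu := mul_le_log (ha m) (hfix m) h3 (by linarith)
    rw [div_mul_eq_mul_div, div_le_div_iff₀ (by linarith) (by norm_num)]
    linarith
end
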